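/- arXiv:2412.17585 — 2 statements merged into one kernel-verified Lean document; each statement's English description precedes it below -/
import Mathlib

section
/- Let (ρ, u) be a weak solution of the stationary isentropic Navier–Stokes system on ℝ³ with exponent γ ≥ 6 and potential G ∈ D₀^{1,q}(ℝ³) for some q with 6γ/(5γ−6) ≤ q ≤ 3/2. If ρ ∈ L⁶(ℝ³) ∩ L^γ(ℝ³), then ρ ∈ L^{2γ}(ℝ³). -/
noncomputable section

open MeasureTheory Metric Filter Topology Set

/-- Three-dimensional Euclidean space. -/
abbrev E3 : Type := EuclideanSpace ℝ (Fin 3)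

/-- Partial derivative of a scalar function in the `i`-th coordinate direction. -/
def pd (f : E3 → ℝ) (i : Fin 3) : E3 → ℝ :=
  fun x => fderiv ℝ f x (EuclideanSpace.single i 1)

/-- Classical gradient matrix of a vector field: `(tgrad φ x) i j = ∂_j φ_i (x)`. -/
def tgrad (φ : E3 → Fin 3 → ℝ) (x : E3) : Fin 3 → Fin 3 → ℝ :=
  fun i j => pd (fun y => φ y i) j x

/-- Smooth compactly supported scalar test function with support in `Ω`. -/
def IsTest (Ω : Set E3) (φ : E3 → ℝ) : Prop :=
  ContDiff ℝ ((⊤ : ℕ∞) : WithTop ℕ∞) φ ∧ HasCompactSupport φ ∧ tsupport φ ⊆ Ω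

/-- `C^n` compactly supported vector-valued test function with support in `Ω`. -/
def IsTestVec (n : WithTop ℕ∞) (Ω : Set E3) (φ : E3 → Fin 3 → ℝ) : Prop :=
  ContDiff ℝ n φ ∧ HasCompactSupport φ ∧ tsupport φ ⊆ Ω

/-- The Newtonian viscous stress tensor
`S(M) = μ (M + Mᵗ - (2/3) (tr M) I) + η (tr M) I`. -/
def Smat (μ η : ℝ) (M : Fin 3 → Fin 3 → ℝ) : Fin 3 → Fin 3 → ℝ :=
  fun i j =>
    μ * (M i j + M j i - (2 / 3) * (∑ k, M k k) * (if i = j then (1 : ℝ) else 0))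
      + η * (∑ k, M k k) * (if i = j then (1 : ℝ) else 0)

/-- `dG` is the weak gradient of the scalar function `G` on `Ω`. -/
def HasWeakGradOn (Ω : Set E3) (G : E3 → ℝ) (dG : E3 → Fin 3 → ℝ) : Prop :=
  ∀ φ : E3 → ℝ, IsTest Ω φ → ∀ i : Fin 3,
    ∫ x in Ω, G x * pd φ i x = - ∫ x in Ω, dG x i * φ x

/-- `du` is the weak gradient (Jacobian) of the vector field `u` on `Ω`. -/
def HasWeakGradVecOn (Ω : Set E3) (u : E3 → Fin 3 → ℝ) (du : E3 → Fin 3 → Fin 3 → ℝ) : Prop :=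
  ∀ φ : E3 → ℝ, IsTest Ω φ → ∀ i j : Fin 3,
    ∫ x in Ω, u x i * pd φ j x = - ∫ x in Ω, du x i j * φ x

/-- `u ∈ D₀^{1,2}(Ω; ℝ³)` with weak gradient `du`: `u` is locally integrable on `Ω`, its weak
gradient belongs to `L²(Ω)`, and `u` can be approximated by smooth compactly supported fields
`uₙ` with `∇uₙ → ∇u` in `L²(Ω)` and `uₙ → u` in `L⁶(Ω)`. -/
def MemD012 (Ω : Set E3) (u : E3 → Fin 3 → ℝ) (du : E3 → Fin 3 → Fin 3 → ℝ) : Prop :=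
  LocallyIntegrableOn u Ω volume ∧
  HasWeakGradVecOn Ω u du ∧
  MemLp du 2 (volume.restrict Ω) ∧
  ∃ un : ℕ → E3 → Fin 3 → ℝ,
    (∀ n, IsTestVec ((⊤ : ℕ∞) : WithTop ℕ∞) Ω (un n)) ∧
    Tendsto (fun n => eLpNorm (fun x => tgrad (un n) x - du x) 2 (volume.restrict Ω))
      atTop (𝓝 0) ∧
    Tendsto (fun n => eLpNorm (fun x => un n x - u x) 6 (volume.restrict Ω)) atTop (𝓝 0)

/-- `G ∈ D₀^{1,q}(Ω)` with weak gradient `dG`. -/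
def MemD01q (Ω : Set E3) (G : E3 → ℝ) (dG : E3 → Fin 3 → ℝ) (q : ℝ) : Prop :=
  HasWeakGradOn Ω G dG ∧
  MemLp dG (ENNReal.ofReal q) (volume.restrict Ω) ∧
  ∃ Gn : ℕ → E3 → ℝ,
    (∀ n, IsTest Ω (Gn n)) ∧
    Tendsto (fun n =>
        eLpNorm (fun x => (fun i => pd (Gn n) i x) - dG x) (ENNReal.ofReal q)
          (volume.restrict Ω)) atTop (𝓝 0) ∧
    ∀ K : Set E3, IsCompact K → K ⊆ Ω →
      Tendsto (fun n => ∫ x in K, |Gn n x - G x|) atTop (𝓝 0)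

/-- `G ∈ W^{1,∞}(Ω)` with weak gradient `dG`: both `G` and `∇G` are essentially bounded. -/
def MemW1inf (Ω : Set E3) (G : E3 → ℝ) (dG : E3 → Fin 3 → ℝ) : Prop :=
  HasWeakGradOn Ω G dG ∧
  MemLp G ⊤ (volume.restrict Ω) ∧ MemLp dG ⊤ (volume.restrict Ω)

/-- Weak solution `(ρ, u)` (with weak gradient `du` of `u` and weak gradient `dG` of `G`) of the
stationary barotropic Navier–Stokes system
`div(ρu) = 0`, `div(ρ u⊗u) + ∇p(ρ) − div S(∇u) = ρ∇G` on `Ω` with no-slip boundary condition. -/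
structure WeakSolution (Ω : Set E3) (μ η : ℝ) (p : ℝ → ℝ)
    (G : E3 → ℝ) (dG : E3 → Fin 3 → ℝ)
    (ρ : E3 → ℝ) (u : E3 → Fin 3 → ℝ) (du : E3 → Fin 3 → Fin 3 → ℝ) : Prop where
  aemeas_ρ : AEMeasurable ρ volume
  aemeas_u : AEMeasurable u volume
  weakGrad_G : HasWeakGradOn Ω G dG
  ρ_nonneg : ∀ᵐ x ∂(volume.restrict Ω), 0 ≤ ρ x
  ρu_locInt : LocallyIntegrableOn (fun x => fun i => ρ x * u x i) (closure Ω) volume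
  mass : ∀ φ : E3 → ℝ, ContDiff ℝ ((⊤ : ℕ∞) : WithTop ℕ∞) φ → HasCompactSupport φ →
    ∫ x in Ω, ρ x * (∑ i, u x i * pd φ i x) = 0
  ρ_locInt : LocallyIntegrableOn ρ Ω volume
  ρu2_locInt : LocallyIntegrableOn (fun x => ρ x * (∑ i, (u x i) ^ 2)) Ω volume
  pρ_locInt : LocallyIntegrableOn (fun x => p (ρ x)) Ω volume
  ρdG_locInt : LocallyIntegrableOn (fun x => fun i => ρ x * dG x i) Ω volume
  u_D012 : MemD012 Ω u du
  momentum : ∀ φ : E3 → Fin 3 → ℝ, IsTestVec 1 Ω φ →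
    ∫ x in Ω, ((∑ i, ∑ j, ρ x * u x i * u x j * tgrad φ x i j)
        + p (ρ x) * (∑ i, tgrad φ x i i))
      = (∫ x in Ω, ∑ i, ∑ j, Smat μ η (du x) i j * tgrad φ x i j)
        - ∫ x in Ω, ∑ i, ρ x * dG x i * φ x i

/-- Weak solution of the stationary isentropic Navier–Stokes system on `ℝ³`
with pressure `p(ρ) = ρ^γ`. -/
def IsentropicWeakSolution (μ η γ : ℝ) (G : E3 → ℝ) (dG : E3 → Fin 3 → ℝ)
    (ρ : E3 → ℝ) (u : E3 → Fin 3 → ℝ) (du : E3 → Fin 3 → Fin 3 → ℝ) : Prop :=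
  WeakSolution univ μ η (fun s => s ^ γ) G dG ρ u du

/-- The `L^r` norm of a scalar function on a set. -/
def lpNormOn (f : E3 → ℝ) (r : ℝ) (s : Set E3) : ℝ :=
  (∫ x in s, |f x| ^ r) ^ (1 / r)

/-- Euclidean norm of a vector in `ℝ³` (represented as `Fin 3 → ℝ`). -/
def vnorm (v : Fin 3 → ℝ) : ℝ := Real.sqrt (∑ i, (v i) ^ 2)

/-- The `L^r` norm of a vector field on a set. -/
def vecLpNormOn (u : E3 → Fin 3 → ℝ) (r : ℝ) (s : Set E3) : ℝ :=
  (∫ x in s, (vnorm (u x)) ^ r) ^ (1 / r)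

/-- The exponent `f(α, γ)` from the higher-integrability propositions. -/
def fExp (α γ : ℝ) : ℝ :=
  if 6 ≤ γ then
    (if (2 * γ - 3) / (γ * (γ - 1)) ≤ α then α - 3 / (2 * γ)
     else α / γ + 1 / (2 * γ) - 3 / γ ^ 2)
  else
    (if 3 / (2 * (γ - 1)) ≤ α then α - 3 / (2 * γ)
     else if 1 / (2 * (γ - 1)) ≤ α then α / γ
     else α / γ ^ 2 + 1 / (2 * γ ^ 2))

/-- The exponent `g(α, β, γ)`. -/
def gExp (α β γ : ℝ) : ℝ :=
  if fExp α γ ≤ (γ - 3) / (γ * (3 * γ - 5)) then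
    γ * (1 - fExp α γ) * (6 - β) / (3 * β * (γ - 1))
  else (1 - γ * fExp α γ) * (6 - β) / (2 * β)

open scoped SchwartzMap FourierTransform LineDeriv in
lemma memLp_two_of_bound (p : E3 → ℝ) (hp : Integrable p volume) (C : ℝ)
    (h : ∀ ψ : 𝓢(E3, ℝ), |∫ x, p x * ψ x| ≤ C * ‖ψ.toLp 2 volume‖) : MemLp p 2 volume := by
  have hint : ∀ ψ : 𝓢(E3, ℝ), Integrable (fun x => p x * ψ x) volume := by
    intro ψ
    have h1 := ψ.memLp_top volume
    exact hp.mul_of_top_left h1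
  let f : 𝓢(E3, ℝ) →ₗ[ℝ] ℝ :=
    { toFun := fun ψ => ∫ x, p x * ψ x
      map_add' := by
        intro a b
        simp only [_root_.add_apply, mul_add]
        exact integral_add (hint a) (hint b)
      map_smul' := by
        intro c a
        simp only [_root_.smul_apply, smul_eq_mul, RingHom.id_apply]
        rw [← integral_const_mul]
        congr 1; ext x; ring }
  let e : 𝓢(E3, ℝ) →ₗ[ℝ] Lp ℝ 2 (volume : Measure E3) :=
    (SchwartzMap.toLpCLM ℝ ℝ 2 (volume : Measure E3)).toLinearMap
  have hd : DenseRange e := SchwartzMap.denseRange_toLpCLM (F := ℝ) (p := 2) (by simp)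
  have hb : ∀ x, ‖f x‖ ≤ C * ‖e x‖ := fun x => h x
  let T := f.extendOfNorm e
  have hT : ∀ x, T (e x) = f x := LinearMap.extendOfNorm_eq hd ⟨C, hb⟩
  let g : Lp ℝ 2 (volume : Measure E3) := (InnerProductSpace.toDual ℝ _).symm T
  have hg : ∀ ψ : 𝓢(E3, ℝ), ∫ x, p x * ψ x = ∫ x, g x * ψ x := by
    intro ψ
    have h1 : inner ℝ g (e ψ) = T (e ψ) := InnerProductSpace.toDual_symm_apply
    rw [hT] at h1
    have h2 : f ψ = ∫ x, p x * ψ x := rfl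
    rw [← h2, ← h1, L2.inner_def]
    apply integral_congr_ae
    filter_upwards [ψ.coeFn_toLp 2 volume] with x hx
    have : (e ψ : E3 → ℝ) x = ψ x := hx
    rw [this]
    simp [mul_comm]
  have hae : ∀ᵐ x, p x = g x := by
    apply ae_eq_of_integral_contDiff_smul_eq hp.locallyIntegrable
    · exact (Lp.memLp g).locallyIntegrable (by norm_num)
    · intro ψ h1 h2
      have := hg (h2.toSchwartzMap h1)
      simpa [mul_comm] using this
  exact (memLp_congr_ae hae).2 (Lp.memLp g)

lemma cutoff_exists : ∃ (χ : ℕ → E3 → ℝ) (D : ℝ), 0 ≤ D ∧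
    (∀ n, ContDiff ℝ 1 (χ n)) ∧ (∀ n, HasCompactSupport (χ n)) ∧
    (∀ n x, |χ n x| ≤ 1) ∧ (∀ x, Tendsto (fun n => χ n x) atTop (𝓝 1)) ∧
    (∀ n x i, |pd (χ n) i x| ≤ D * (1 / ((n : ℝ) + 1))) := by
  let b : ContDiffBump (0 : E3) := ⟨1, 2, by norm_num, by norm_num⟩
  have hb1 : ContDiff ℝ 1 (b : E3 → ℝ) := b.contDiff
  have hbc : HasCompactSupport (b : E3 → ℝ) := b.hasCompactSupport
  obtain ⟨D, hD⟩ := (hbc.fderiv (𝕜 := ℝ)).exists_bound_of_continuous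
    (hb1.continuous_fderiv (by norm_num))
  have hD0 : 0 ≤ D := (norm_nonneg _).trans (hD 0)
  have hpos : ∀ n : ℕ, (0 : ℝ) < 1 / ((n : ℝ) + 1) := fun n => by positivity
  refine ⟨fun n x => b ((1 / ((n : ℝ) + 1)) • x), D, hD0, ?_, ?_, ?_, ?_, ?_⟩
  · intro n
    exact hb1.comp (contDiff_const_smul _)
  · intro n
    exact hbc.comp_smul (hpos n).ne'
  · intro n x
    rw [abs_of_nonneg b.nonneg]
    exact b.le_one
  · intro x
    have h1 : Tendsto (fun n : ℕ => (1 / ((n : ℝ) + 1)) • x) atTop (𝓝 ((0 : ℝ) • x)) :=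
      tendsto_one_div_add_atTop_nhds_zero_nat.smul_const x
    rw [zero_smul] at h1
    have h2 := (hb1.continuous.tendsto (0 : E3)).comp h1
    have h3 : b (0 : E3) = 1 := b.one_of_mem_closedBall (by simp [b])
    rw [h3] at h2
    exact h2
  · intro n x i
    unfold pd
    have h1 : HasFDerivAt (fun x : E3 => b ((1 / ((n : ℝ) + 1)) • x))
        ((fderiv ℝ b ((1 / ((n : ℝ) + 1)) • x)).comp
          ((1 / ((n : ℝ) + 1)) • ContinuousLinearMap.id ℝ E3)) x := by
      have hd : HasFDerivAt (b : E3 → ℝ) (fderiv ℝ b ((1 / ((n : ℝ) + 1)) • x))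
        ((1 / ((n : ℝ) + 1)) • x) :=
        (hb1.differentiable (by norm_num) _).hasFDerivAt
      exact hd.comp x ((hasFDerivAt_id x).const_smul (1 / ((n : ℝ) + 1)))
    rw [h1.fderiv]
    simp only [ContinuousLinearMap.comp_apply, _root_.smul_apply,
      ContinuousLinearMap.id_apply, map_smul, smul_eq_mul, abs_mul]
    rw [abs_of_pos (hpos n), mul_comm]
    apply mul_le_mul_of_nonneg_right _ (hpos n).le
    have := (fderiv ℝ b ((1 / ((n : ℝ) + 1)) • x)).le_opNorm (EuclideanSpace.single i 1)
    refine (Real.norm_eq_abs _ ▸ this).trans ?_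
    simpa using hD _

lemma extend_bound (p : E3 → ℝ) (hp : Integrable p volume) (C : ℝ) (hC : 0 ≤ C)
    (H : ∀ φ : E3 → Fin 3 → ℝ, IsTestVec 1 univ φ →
      |∫ x, p x * ∑ i, tgrad φ x i i| ≤
        C * ∑ i, ∑ j, (eLpNorm (fun x => tgrad φ x i j) 2 volume).toReal)
    (φ : E3 → Fin 3 → ℝ) (hφ : ContDiff ℝ 1 φ)
    (h2 : ∀ i, MemLp (fun x => φ x i) 2 volume)
    (h2' : ∀ i j, MemLp (fun x => tgrad φ x i j) 2 volume)
    (B : ℝ) (hB : ∀ x i, |φ x i| ≤ B) (hB' : ∀ x i j, |tgrad φ x i j| ≤ B) :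
    |∫ x, p x * ∑ i, tgrad φ x i i| ≤
        C * ∑ i, ∑ j, (eLpNorm (fun x => tgrad φ x i j) 2 volume).toReal := by
  obtain ⟨χ, D, hD, hχ1, hχc, hχb, hχt, hχd⟩ := cutoff_exists
  have hB0 : 0 ≤ B := (abs_nonneg _).trans (hB 0 0)
  have hφi : ∀ i, ContDiff ℝ 1 (fun x => φ x i) := fun i => (contDiff_pi.1 hφ) i
  have htg : ∀ n x i j, tgrad (fun x k => χ n x * φ x k) x i j
      = χ n x * tgrad φ x i j + φ x i * pd (χ n) j x := by
    intro n x i j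
    unfold tgrad pd
    rw [fderiv_fun_mul ((hχ1 n).differentiable (by norm_num) x)
      ((hφi i).differentiable (by norm_num) x)]
    simp
  have hone : ∀ n : ℕ, (1 / ((n : ℝ) + 1)) ≤ 1 := by
    intro n
    rw [div_le_one (by positivity)]
    have : (0 : ℝ) ≤ n := by positivity
    linarith
  have hcont : ∀ i j, Continuous (fun x => tgrad φ x i j) := by
    intro i j
    exact ((hφi i).continuous_fderiv (by norm_num)).clm_apply continuous_const
  have hcontχ : ∀ n j, Continuous (fun x => pd (χ n) j x) := by
    intro n j
    exact ((hχ1 n).continuous_fderiv (by norm_num)).clm_apply continuous_const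
  have key : ∀ n : ℕ, |∫ x, p x * ∑ i, tgrad (fun x k => χ n x * φ x k) x i i| ≤
      C * ∑ i, ∑ j, ((eLpNorm (fun x => tgrad φ x i j) 2 volume).toReal
        + D * (1 / ((n : ℝ) + 1)) * (eLpNorm (fun x => φ x i) 2 volume).toReal) := by
    intro n
    have hT : IsTestVec 1 univ (fun x k => χ n x * φ x k) := by
      refine ⟨contDiff_pi.2 fun i => (hχ1 n).mul (hφi i), ?_, subset_univ _⟩
      apply (hχc n).mono
      intro x hx hx0
      apply hx
      ext k
      simp [hx0]
    refine (H _ hT).trans (mul_le_mul_of_nonneg_left ?_ hC)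
    refine Finset.sum_le_sum fun i _ => Finset.sum_le_sum fun j _ => ?_
    have hfin : D * (1 / ((n : ℝ) + 1)) * (eLpNorm (fun x => φ x i) 2 volume).toReal
        = (ENNReal.ofReal (D * (1 / ((n : ℝ) + 1))) * eLpNorm (fun x => φ x i) 2 volume).toReal := by
      rw [ENNReal.toReal_mul, ENNReal.toReal_ofReal (by positivity)]
    rw [hfin, ← ENNReal.toReal_add (h2' i j).2.ne
      (ENNReal.mul_ne_top ENNReal.ofReal_ne_top (h2 i).2.ne)]
    apply ENNReal.toReal_mono
      (ENNReal.add_ne_top.2 ⟨(h2' i j).2.ne, ENNReal.mul_ne_top ENNReal.ofReal_ne_top (h2 i).2.ne⟩)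
    simp_rw [htg]
    refine (eLpNorm_add_le (f := fun x => χ n x * tgrad φ x i j)
      (g := fun x => φ x i * pd (χ n) j x) ?_ ?_ (by norm_num)).trans ?_
    · exact ((hχ1 n).continuous.mul (hcont i j)).aestronglyMeasurable
    · exact ((hφi i).continuous.mul (hcontχ n j)).aestronglyMeasurable
    · gcongr
      · apply eLpNorm_mono
        intro x
        rw [norm_mul]
        exact mul_le_of_le_one_left (norm_nonneg _) (hχb n x)
      · apply eLpNorm_le_mul_eLpNorm_of_ae_le_mul
        refine Eventually.of_forall fun x => ?_
        rw [norm_mul, mul_comm]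
        exact mul_le_mul_of_nonneg_right (hχd n x j) (norm_nonneg _)
  have lim1 : Tendsto (fun n : ℕ => ∫ x, p x * ∑ i, tgrad (fun x k => χ n x * φ x k) x i i) atTop
      (𝓝 (∫ x, p x * ∑ i, tgrad φ x i i)) := by
    apply tendsto_integral_of_dominated_convergence (fun x => |p x| * ∑ i : Fin 3, (B + B * D))
    · intro n
      apply hp.1.mul
      simp_rw [htg]
      refine Continuous.aestronglyMeasurable ?_
      refine continuous_finsetSum _ fun i _ => ?_
      exact ((hχ1 n).continuous.mul (hcont i i)).add ((hφi i).continuous.mul (hcontχ n i))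
    · exact hp.abs.mul_const _
    · intro n
      refine Eventually.of_forall fun x => ?_
      rw [norm_mul]
      refine mul_le_mul_of_nonneg_left ?_ (norm_nonneg _)
      refine (norm_sum_le _ _).trans (Finset.sum_le_sum fun i _ => ?_)
      rw [htg]
      refine (norm_add_le _ _).trans ?_
      rw [norm_mul, norm_mul]
      refine add_le_add ?_ ?_
      · exact (mul_le_of_le_one_left (norm_nonneg _) (hχb n x)).trans (hB' x i i)
      · refine mul_le_mul (hB x i) ((hχd n x i).trans ?_) (norm_nonneg _) hB0
        exact mul_le_of_le_one_right hD (hone n)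
    · refine Eventually.of_forall fun x => ?_
      apply Tendsto.const_mul
      apply tendsto_finsetSum
      intro i _
      simp_rw [htg]
      have a1 := (hχt x).mul_const (tgrad φ x i i)
      have a2 : Tendsto (fun n => pd (χ n) i x) atTop (𝓝 0) := by
        apply squeeze_zero_norm (fun n => hχd n x i)
        simpa using (tendsto_one_div_add_atTop_nhds_zero_nat (𝕜 := ℝ)).const_mul D
      have a3 := a2.const_mul (φ x i)
      simpa using a1.add a3
  have lim2 : Tendsto (fun n : ℕ => C * ∑ i, ∑ j,
      ((eLpNorm (fun x => tgrad φ x i j) 2 volume).toReal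
        + D * (1 / ((n : ℝ) + 1)) * (eLpNorm (fun x => φ x i) 2 volume).toReal)) atTop
      (𝓝 (C * ∑ i, ∑ j, (eLpNorm (fun x => tgrad φ x i j) 2 volume).toReal)) := by
    apply Tendsto.const_mul
    refine tendsto_finsetSum _ fun i _ => tendsto_finsetSum _ fun j _ => ?_
    have := (((tendsto_one_div_add_atTop_nhds_zero_nat (𝕜 := ℝ)).const_mul D).mul_const
      (eLpNorm (fun x => φ x i) 2 volume).toReal).const_add
      (eLpNorm (fun x => tgrad φ x i j) 2 volume).toReal
    simpa using this
  exact le_of_tendsto_of_tendsto' lim1.abs lim2 key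

/-- The resolvent symbol `1 / (1 + k² |ξ|²)`. -/
def rsym (k : ℝ) (ξ : E3) : ℝ := (1 + ‖k • ξ‖ ^ 2) ^ (-1 : ℝ)

lemma rsym_eq (k : ℝ) (ξ : E3) : rsym k ξ = 1 / (1 + k ^ 2 * ‖ξ‖ ^ 2) := by
  unfold rsym
  rw [Real.rpow_neg_one, norm_smul, mul_pow, Real.norm_eq_abs, sq_abs, one_div]

lemma rsym_temperate (k : ℝ) : (rsym k).HasTemperateGrowth := by
  have h1 := Function.hasTemperateGrowth_one_add_norm_sq_rpow E3 (-1)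
  have h2 : (fun ξ : E3 => k • ξ).HasTemperateGrowth :=
    (k • ContinuousLinearMap.id ℝ E3).hasTemperateGrowth
  exact h1.comp h2

open scoped SchwartzMap FourierTransform LineDeriv in
/-- The resolvent of `ψ`. -/
def resolv (k : ℝ) (ψ : 𝓢(E3, ℂ)) : 𝓢(E3, ℂ) :=
  𝓕⁻ (SchwartzMap.smulLeftCLM ℂ (rsym k) (𝓕 ψ))

open scoped SchwartzMap FourierTransform LineDeriv in
lemma fourier_resolv (k : ℝ) (ψ : 𝓢(E3, ℂ)) (ξ : E3) :
    𝓕 (resolv k ψ) ξ = rsym k ξ * 𝓕 ψ ξ := by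
  unfold resolv
  rw [FourierTransform.fourier_fourierInv_eq,
    SchwartzMap.smulLeftCLM_apply_apply (rsym_temperate k)]
  simp

open scoped SchwartzMap FourierTransform LineDeriv in
lemma fourier_deriv_apply (f : 𝓢(E3, ℂ)) (i : Fin 3) (ξ : E3) :
    𝓕 (∂_{(EuclideanSpace.single i (1 : ℝ) : E3)} f) ξ
      = (2 * Real.pi * Complex.I) * (ξ i * 𝓕 f ξ) := by
  rw [SchwartzMap.fourier_lineDerivOp_eq]
  rw [_root_.smul_apply, SchwartzMap.smulLeftCLM_apply_apply (by fun_prop)]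
  simp [EuclideanSpace.inner_single_right]

open scoped SchwartzMap FourierTransform LineDeriv in
/-- The approximate gradient potential of `ψ`. -/
def potl (k : ℝ) (ψ : 𝓢(E3, ℂ)) (i : Fin 3) : 𝓢(E3, ℂ) :=
  (((-(k ^ 2 / (4 * Real.pi ^ 2)) : ℝ) : ℂ)) •
    ∂_{(EuclideanSpace.single i (1 : ℝ) : E3)} (resolv k ψ)

open scoped SchwartzMap FourierTransform LineDeriv in
lemma fourier_deriv_potl (k : ℝ) (ψ : 𝓢(E3, ℂ)) (i j : Fin 3) (ξ : E3) :
    𝓕 (∂_{(EuclideanSpace.single j (1 : ℝ) : E3)} (potl k ψ i)) ξ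
      = ((k ^ 2 * (ξ i * ξ j) * rsym k ξ : ℝ) : ℂ) * 𝓕 ψ ξ := by
  rw [fourier_deriv_apply]
  unfold potl
  rw [FourierTransform.fourier_smul, _root_.smul_apply, fourier_deriv_apply, fourier_resolv]
  push_cast
  have hpi : (Real.pi : ℂ) ≠ 0 := by exact_mod_cast Real.pi_ne_zero
  have hI : Complex.I ^ 2 = -1 := Complex.I_sq
  simp only [smul_eq_mul]
  field_simp
  rw [hI]
  ring

lemma sq_coord_sum (ξ : E3) : ∑ i, ξ i * ξ i = ‖ξ‖ ^ 2 := by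
  rw [EuclideanSpace.norm_sq_eq]
  simp [sq]

lemma coord_mul_le (ξ : E3) (i j : Fin 3) : |ξ i * ξ j| ≤ ‖ξ‖ ^ 2 := by
  rw [abs_mul, sq]
  exact mul_le_mul (PiLp.norm_apply_le ξ i) (PiLp.norm_apply_le ξ j) (abs_nonneg _) (norm_nonneg _)

open scoped SchwartzMap FourierTransform LineDeriv in
lemma div_potl (k : ℝ) (ψ : 𝓢(E3, ℂ)) :
    ∑ i, ∂_{(EuclideanSpace.single i (1 : ℝ) : E3)} (potl k ψ i) = ψ - resolv k ψ := by
  have h : 𝓕 (∑ i, ∂_{(EuclideanSpace.single i (1 : ℝ) : E3)} (potl k ψ i))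
      = 𝓕 (ψ - resolv k ψ) := by
    have e1 : 𝓕 (∑ i, ∂_{(EuclideanSpace.single i (1 : ℝ) : E3)} (potl k ψ i))
      = ∑ i, 𝓕 (∂_{(EuclideanSpace.single i (1 : ℝ) : E3)} (potl k ψ i)) :=
      map_sum (FourierTransform.fourierCLM ℂ 𝓢(E3, ℂ)) _ _
    have e2 : 𝓕 (ψ - resolv k ψ) = 𝓕 ψ - 𝓕 (resolv k ψ) :=
      map_sub (FourierTransform.fourierCLM ℂ 𝓢(E3, ℂ)) _ _
    rw [e1, e2]
    ext ξ
    rw [_root_.sum_apply, _root_.sub_apply, fourier_resolv]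
    simp_rw [fourier_deriv_potl]
    rw [← Finset.sum_mul, ← Complex.ofReal_sum]
    have : ∑ i, k ^ 2 * (ξ i * ξ i) * rsym k ξ = 1 - rsym k ξ := by
      rw [← Finset.sum_mul, ← Finset.mul_sum, sq_coord_sum, rsym_eq]
      have : (1 + k ^ 2 * ‖ξ‖ ^ 2) ≠ 0 := by positivity
      field_simp
      ring
    rw [this]
    push_cast
    ring
  have := congrArg (fun f : 𝓢(E3, ℂ) => 𝓕⁻ f) h
  simpa [FourierTransform.fourierInv_fourier_eq] using this

open scoped SchwartzMap FourierTransform LineDeriv in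
lemma norm_deriv_potl (k : ℝ) (ψ : 𝓢(E3, ℂ)) (i j : Fin 3) :
    eLpNorm (∂_{(EuclideanSpace.single j (1 : ℝ) : E3)} (potl k ψ i) : 𝓢(E3, ℂ)) 2 volume
      ≤ eLpNorm ψ 2 volume := by
  have hP : ∀ f : 𝓢(E3, ℂ), eLpNorm (𝓕 f : 𝓢(E3, ℂ)) 2 volume = eLpNorm f 2 volume := by
    intro f
    have := SchwartzMap.norm_fourier_toL2_eq f
    rw [SchwartzMap.norm_toLp, SchwartzMap.norm_toLp] at this
    exact (ENNReal.toReal_eq_toReal_iff' (SchwartzMap.eLpNorm_lt_top _ _ _).ne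
      (SchwartzMap.eLpNorm_lt_top _ _ _).ne).1 this
  rw [← hP, ← hP ψ]
  apply eLpNorm_mono
  intro ξ
  rw [fourier_deriv_potl, norm_mul]
  apply mul_le_of_le_one_left (norm_nonneg _)
  rw [Complex.norm_real, Real.norm_eq_abs, rsym_eq, mul_one_div, abs_div,
    abs_of_pos (by positivity : 0 < 1 + k ^ 2 * ‖ξ‖ ^ 2), div_le_one (by positivity), abs_mul,
    abs_of_nonneg (sq_nonneg k)]
  have := mul_le_mul_of_nonneg_left (coord_mul_le ξ i j) (sq_nonneg k)
  linarith

open scoped SchwartzMap FourierTransform LineDeriv in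
lemma resolv_bound (k : ℝ) (ψ : 𝓢(E3, ℂ)) (x : E3) :
    ‖resolv k ψ x‖ ≤ ∫ ξ, rsym k ξ * ‖𝓕 ψ ξ‖ := by
  unfold resolv
  rw [SchwartzMap.fourierInv_apply_eq]
  have := SchwartzMap.norm_fourier_apply_le_toLp_one
    (SchwartzMap.smulLeftCLM ℂ (rsym k) (𝓕 ψ)) (-x)
  refine le_trans (le_of_eq ?_) (this.trans (le_of_eq ?_))
  · rfl
  · rw [SchwartzMap.norm_toLp_one]
    apply integral_congr_ae
    refine Eventually.of_forall fun ξ => ?_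
    simp only
    rw [SchwartzMap.smulLeftCLM_apply_apply (rsym_temperate k), norm_smul, Real.norm_eq_abs,
      abs_of_nonneg]
    rw [rsym_eq]
    positivity

open scoped SchwartzMap FourierTransform LineDeriv in
lemma resolv_lim (ψ : 𝓢(E3, ℂ)) :
    Tendsto (fun n : ℕ => ∫ ξ, rsym n ξ * ‖𝓕 ψ ξ‖) atTop (𝓝 0) := by
  have h0 : ∫ ξ : E3, (0 : ℝ) = 0 := by simp
  rw [← h0]
  apply tendsto_integral_of_dominated_convergence (fun ξ => ‖𝓕 ψ ξ‖)
  · intro n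
    exact ((rsym_temperate n).1.continuous.mul (𝓕 ψ).continuous.norm).aestronglyMeasurable
  · exact (𝓕 ψ).integrable.norm
  · intro n
    refine Eventually.of_forall fun ξ => ?_
    rw [norm_mul, norm_norm]
    apply mul_le_of_le_one_left (norm_nonneg _)
    rw [rsym_eq, Real.norm_eq_abs, abs_of_pos (by positivity), div_le_one (by positivity)]
    have : 0 ≤ (n : ℝ) ^ 2 * ‖ξ‖ ^ 2 := by positivity
    linarith
  · have hne : ∀ᵐ ξ : E3, ξ ≠ 0 := by
      simp [ae_iff]
    filter_upwards [hne] with ξ hξ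
    rw [← zero_mul ‖𝓕 ψ ξ‖]
    apply Tendsto.mul_const
    simp_rw [rsym_eq, one_div]
    apply Tendsto.inv_tendsto_atTop
    apply tendsto_atTop_add_const_left
    apply Tendsto.atTop_mul_const (by positivity)
    exact (tendsto_pow_atTop (by norm_num)).comp tendsto_natCast_atTop_atTop

open scoped SchwartzMap FourierTransform LineDeriv in
lemma schwartz_bound (p : E3 → ℝ) (hp : Integrable p volume) (C : ℝ) (hC : 0 ≤ C)
    (H : ∀ φ : E3 → Fin 3 → ℝ, IsTestVec 1 univ φ →
      |∫ x, p x * ∑ i, tgrad φ x i i| ≤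
        C * ∑ i, ∑ j, (eLpNorm (fun x => tgrad φ x i j) 2 volume).toReal)
    (ψ : 𝓢(E3, ℂ)) :
    |∫ x, p x * (ψ x).re| ≤ C * ∑ _i : Fin 3, ∑ _j : Fin 3, (eLpNorm ψ 2 volume).toReal := by
  have hre : ∀ (f : 𝓢(E3, ℂ)) (j : Fin 3) (x : E3),
      pd (fun y => (f y).re) j x = (∂_{(EuclideanSpace.single j (1 : ℝ) : E3)} f x).re := by
    intro f j x
    rw [SchwartzMap.lineDerivOp_apply_eq_fderiv]
    unfold pd
    have h1 := Complex.reCLM.hasFDerivAt.comp x (f.hasFDerivAt x)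
    have h2 : fderiv ℝ (fun y => (f y).re) x = Complex.reCLM.comp (fderiv ℝ f x) := h1.fderiv
    rw [h2]
    rfl
  have hbd : ∀ f : 𝓢(E3, ℂ), ∃ B : ℝ, ∀ x, ‖f x‖ ≤ B := fun f =>
    ⟨_, fun x => SchwartzMap.norm_le_seminorm ℝ f x⟩
  have hreLp : ∀ f : 𝓢(E3, ℂ), MemLp (fun x => (f x).re) 2 volume := fun f => (f.memLp 2).re
  have key : ∀ n : ℕ, |∫ x, p x * (ψ x - resolv n ψ x).re|
      ≤ C * ∑ _i : Fin 3, ∑ _j : Fin 3, (eLpNorm ψ 2 volume).toReal := by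
    intro n
    set φ : E3 → Fin 3 → ℝ := fun x i => (potl n ψ i x).re with hφdef
    have htg : ∀ x i j, tgrad φ x i j
        = (∂_{(EuclideanSpace.single j (1 : ℝ) : E3)} (potl n ψ i) x).re := by
      intro x i j
      exact hre _ j x
    have hdiv : ∀ x, ∑ i, tgrad φ x i i = (ψ x - resolv n ψ x).re := by
      intro x
      simp_rw [htg]
      rw [← Complex.re_sum, ← _root_.sum_apply, div_potl]
      rfl
    choose B1 hB1 using fun i => hbd (potl n ψ i)
    choose B2 hB2 using fun i j => hbd (∂_{(EuclideanSpace.single j (1 : ℝ) : E3)} (potl n ψ i))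
    have hB1' : ∀ i, 0 ≤ B1 i := fun i => (norm_nonneg _).trans (hB1 i 0)
    have hB2' : ∀ i j, 0 ≤ B2 i j := fun i j => (norm_nonneg _).trans (hB2 i j 0)
    have hs1 : ∀ i, B1 i ≤ ∑ i, B1 i := fun i =>
      Finset.single_le_sum (fun i _ => hB1' i) (Finset.mem_univ i)
    have hs2 : ∀ i j, B2 i j ≤ ∑ i, ∑ j, B2 i j := fun i j =>
      (Finset.single_le_sum (fun j _ => hB2' i j) (Finset.mem_univ j)).trans
        (Finset.single_le_sum (f := fun i => ∑ j, B2 i j)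
          (fun i _ => Finset.sum_nonneg fun j _ => hB2' i j) (Finset.mem_univ i))
    have hn1 : 0 ≤ ∑ i, B1 i := Finset.sum_nonneg fun i _ => hB1' i
    have hn2 : 0 ≤ ∑ i, ∑ j, B2 i j :=
      Finset.sum_nonneg fun i _ => Finset.sum_nonneg fun j _ => hB2' i j
    have := extend_bound p hp C hC H φ
      (contDiff_pi.2 fun i => Complex.reCLM.contDiff.comp ((potl n ψ i).smooth 1))
      (fun i => hreLp _)
      (fun i j => by simp_rw [htg]; exact hreLp _)
      (∑ i, B1 i + ∑ i, ∑ j, B2 i j)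
      (fun x i => (Complex.abs_re_le_norm _).trans
        ((hB1 i x).trans ((hs1 i).trans (le_add_of_nonneg_right hn2))))
      (fun x i j => by
        rw [htg]
        exact (Complex.abs_re_le_norm _).trans
          ((hB2 i j x).trans ((hs2 i j).trans (le_add_of_nonneg_left hn1))))
    simp_rw [hdiv] at this
    refine this.trans (mul_le_mul_of_nonneg_left ?_ hC)
    refine Finset.sum_le_sum fun i _ => Finset.sum_le_sum fun j _ => ?_
    apply ENNReal.toReal_mono (SchwartzMap.eLpNorm_lt_top _ _ _).ne
    refine le_trans ?_ (norm_deriv_potl n ψ i j)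
    apply eLpNorm_mono
    intro x
    rw [htg]
    exact Complex.abs_re_le_norm _
  have lim : Tendsto (fun n : ℕ => ∫ x, p x * (ψ x - resolv n ψ x).re) atTop
      (𝓝 (∫ x, p x * (ψ x).re)) := by
    obtain ⟨B, hB⟩ := hbd ψ
    obtain ⟨M, hM⟩ := (resolv_lim ψ).bddAbove_range
    apply tendsto_integral_of_dominated_convergence (fun x => |p x| * (B + M))
    · intro n
      apply hp.1.mul
      exact (Complex.continuous_re.comp
        (ψ.continuous.sub (resolv n ψ).continuous)).aestronglyMeasurable
    · exact hp.abs.mul_const _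
    · intro n
      refine Eventually.of_forall fun x => ?_
      rw [norm_mul]
      refine mul_le_mul_of_nonneg_left ?_ (norm_nonneg _)
      refine (Complex.abs_re_le_norm _).trans ((norm_sub_le _ _).trans (add_le_add (hB x) ?_))
      exact (resolv_bound n ψ x).trans (hM ⟨n, rfl⟩)
    · refine Eventually.of_forall fun x => ?_
      apply Tendsto.const_mul
      have h1 : Tendsto (fun n : ℕ => resolv n ψ x) atTop (𝓝 0) :=
        squeeze_zero_norm (fun n => resolv_bound n ψ x) (resolv_lim ψ)
      have h2 := (Complex.continuous_re.tendsto _).comp (h1.const_sub (ψ x))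
      rw [sub_zero] at h2
      exact h2
  exact le_of_tendsto' lim.abs key

open scoped SchwartzMap FourierTransform LineDeriv in
lemma memLp_two_of_div_bound (p : E3 → ℝ) (hp : Integrable p volume) (C : ℝ) (hC : 0 ≤ C)
    (H : ∀ φ : E3 → Fin 3 → ℝ, IsTestVec 1 univ φ →
      |∫ x, p x * ∑ i, tgrad φ x i i| ≤
        C * ∑ i, ∑ j, (eLpNorm (fun x => tgrad φ x i j) 2 volume).toReal) :
    MemLp p 2 volume := by
  apply memLp_two_of_bound p hp (C * 9)
  intro ψ
  let ψc : 𝓢(E3, ℂ) := SchwartzMap.postcompCLM (𝕜 := ℝ) Complex.ofRealCLM ψ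
  have hc : ∀ x, ψc x = (ψ x : ℂ) := fun x => rfl
  have h := schwartz_bound p hp C hC H ψc
  have hn : eLpNorm ψc 2 volume = eLpNorm ψ 2 volume := by
    apply eLpNorm_congr_norm_ae
    refine Eventually.of_forall fun x => ?_
    rw [hc, Complex.norm_real]
  rw [hn] at h
  simp only [hc, Complex.ofReal_re] at h
  rw [SchwartzMap.norm_toLp]
  refine h.trans (le_of_eq ?_)
  simp
  ring

lemma holder_bound {f g : E3 → ℝ} {p q : ENNReal} [hpq : ENNReal.HolderTriple p q 1]
    (hf : MemLp f p volume) (hg : MemLp g q volume) :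
    Integrable (fun x => f x * g x) volume ∧
    |∫ x, f x * g x| ≤ (eLpNorm f p volume).toReal * (eLpNorm g q volume).toReal := by
  have hm : MemLp (fun x => f x * g x) 1 volume := hg.mul' hf
  have hi : Integrable (fun x => f x * g x) volume := memLp_one_iff_integrable.1 hm
  refine ⟨hi, ?_⟩
  rw [← Real.norm_eq_abs]
  refine (norm_integral_le_integral_norm _).trans ?_
  rw [integral_norm_eq_lintegral_enorm hi.1, ← ENNReal.toReal_mul]
  apply ENNReal.toReal_mono (ENNReal.mul_ne_top hf.2.ne hg.2.ne)
  rw [← eLpNorm_one_eq_lintegral_enorm]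
  have h := eLpNorm_smul_le_mul_eLpNorm (p := p) (q := q) (r := 1) hg.1 hf.1
  have he : (f • g) = fun x => f x * g x := by
    funext x
    simp
  rw [he] at h
  exact h

lemma norm_fderiv_le_sum (f : E3 → ℝ) (x : E3) : ‖fderiv ℝ f x‖ ≤ ∑ j, |pd f j x| := by
  apply ContinuousLinearMap.opNorm_le_bound _ (Finset.sum_nonneg fun _ _ => abs_nonneg _)
  intro v
  have hv : v = ∑ j, v j • (EuclideanSpace.single j (1 : ℝ) : E3) := by
    ext k
    simp [Pi.single_apply]
  conv_lhs => rw [hv]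
  rw [map_sum, Finset.sum_mul]
  refine (norm_sum_le _ _).trans (Finset.sum_le_sum fun j _ => ?_)
  rw [map_smul, norm_smul, mul_comm]
  exact mul_le_mul_of_nonneg_left (PiLp.norm_apply_le v j) (norm_nonneg _)

lemma sobolev_six : ∃ K : ℝ, 0 ≤ K ∧ ∀ f : E3 → ℝ, ContDiff ℝ 1 f → HasCompactSupport f →
    MemLp f 6 volume ∧ (∀ j, MemLp (fun x => pd f j x) 2 volume) ∧
    (eLpNorm f 6 volume).toReal ≤ K * ∑ j, (eLpNorm (fun x => pd f j x) 2 volume).toReal := by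
  let K := MeasureTheory.SNormLESNormFDerivOfEqConst ℝ (volume : Measure E3) 2
  refine ⟨K, K.2, fun f hf hfc => ?_⟩
  have hpdc : ∀ j, Continuous (fun x => pd f j x) := fun j =>
    (hf.continuous_fderiv (by norm_num)).clm_apply continuous_const
  have hpds : ∀ j, HasCompactSupport (fun x => pd f j x) := fun j => by
    apply (hfc.fderiv (𝕜 := ℝ)).mono
    intro x hx h0
    apply hx
    simp [pd, h0]
  have hpd : ∀ j, MemLp (fun x => pd f j x) 2 volume := fun j =>
    (hpdc j).memLp_of_hasCompactSupport (hpds j)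
  refine ⟨hf.continuous.memLp_of_hasCompactSupport hfc, hpd, ?_⟩
  have h1 : eLpNorm f 6 volume ≤ K * eLpNorm (fderiv ℝ f) 2 volume := by
    have := eLpNorm_le_eLpNorm_fderiv_of_eq (μ := (volume : Measure E3)) hf hfc
      (p := 2) (p' := 6) (by norm_num) (by simp) (by simp; norm_num)
    simpa using this
  have h2 : eLpNorm (fderiv ℝ f) 2 volume ≤ ∑ j, eLpNorm (fun x => pd f j x) 2 volume := by
    calc eLpNorm (fderiv ℝ f) 2 volume
        ≤ eLpNorm (∑ j, fun x => |pd f j x|) 2 volume := by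
          apply eLpNorm_mono_real
          intro x
          rw [Finset.sum_apply]
          exact norm_fderiv_le_sum f x
      _ ≤ ∑ j, eLpNorm (fun x => |pd f j x|) 2 volume := by
          apply eLpNorm_sum_le
          · intro j _
            exact (hpdc j).abs.aestronglyMeasurable
          · norm_num
      _ = _ := by
          refine Finset.sum_congr rfl fun j _ => ?_
          exact eLpNorm_norm (fun x => pd f j x)
  have hfin : ∑ j, eLpNorm (fun x => pd f j x) 2 volume ≠ ⊤ :=
    ENNReal.sum_ne_top.2 fun j _ => (hpd j).2.ne
  have h3 : eLpNorm f 6 volume ≤ K * ∑ j, eLpNorm (fun x => pd f j x) 2 volume :=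
    h1.trans (by gcongr)
  have h4 := ENNReal.toReal_mono (ENNReal.mul_ne_top ENNReal.coe_ne_top hfin) h3
  rw [ENNReal.toReal_mul, ENNReal.toReal_sum (fun j _ => (hpd j).2.ne)] at h4
  exact h4

lemma memLp_between {f : E3 → ℝ} {a b r : ℝ} (ha : 0 < a) (har : a ≤ r) (hrb : r ≤ b)
    (h1 : MemLp f (ENNReal.ofReal a) volume) (h2 : MemLp f (ENNReal.ofReal b) volume) :
    MemLp f (ENNReal.ofReal r) volume := by
  have hr : 0 < r := ha.trans_le har
  have hb : 0 < b := hr.trans_le hrb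
  have i1 := h1.integrable_norm_rpow (by simpa using ha) ENNReal.ofReal_ne_top
  have i2 := h2.integrable_norm_rpow (by simpa using hb) ENNReal.ofReal_ne_top
  rw [← integrable_norm_rpow_iff h1.1 (by simpa using hr) ENNReal.ofReal_ne_top]
  rw [ENNReal.toReal_ofReal ha.le] at i1
  rw [ENNReal.toReal_ofReal hb.le] at i2
  rw [ENNReal.toReal_ofReal hr.le]
  refine (i1.add i2).mono' ?_ ?_
  · exact (h1.1.norm.aemeasurable.pow_const r).aestronglyMeasurable
  · refine Eventually.of_forall fun x => ?_
    rw [Real.norm_eq_abs, abs_of_nonneg (by positivity)]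
    simp only [Pi.add_apply]
    rcases le_total 1 ‖f x‖ with h | h
    · have := Real.rpow_le_rpow_of_exponent_le h hrb
      have h0 : 0 ≤ ‖f x‖ ^ a := by positivity
      linarith
    · have h0 : 0 ≤ ‖f x‖ ^ b := by positivity
      have := Real.rpow_le_rpow_of_exponent_ge' (norm_nonneg (f x)) h ha.le har
      linarith

lemma div_bound_of_data (p : E3 → ℝ) (hp : Integrable p volume)
    (A S : Fin 3 → Fin 3 → E3 → ℝ) (F : Fin 3 → E3 → ℝ)
    (hA : ∀ i j, MemLp (A i j) 2 volume) (hS : ∀ i j, MemLp (S i j) 2 volume)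
    (hF : ∀ i, MemLp (F i) (ENNReal.ofReal (6 / 5)) volume)
    (hmom : ∀ φ : E3 → Fin 3 → ℝ, IsTestVec 1 univ φ →
      ∫ x, ((∑ i, ∑ j, A i j x * tgrad φ x i j) + p x * (∑ i, tgrad φ x i i))
      = (∫ x, ∑ i, ∑ j, S i j x * tgrad φ x i j) - ∫ x, ∑ i, F i x * φ x i) :
    ∃ C : ℝ, 0 ≤ C ∧ ∀ φ : E3 → Fin 3 → ℝ, IsTestVec 1 univ φ →
      |∫ x, p x * ∑ i, tgrad φ x i i| ≤
        C * ∑ i, ∑ j, (eLpNorm (fun x => tgrad φ x i j) 2 volume).toReal := by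
  obtain ⟨K, hK, hsob⟩ := sobolev_six
  let a : Fin 3 → Fin 3 → ℝ := fun i j => (eLpNorm (A i j) 2 volume).toReal
  let s : Fin 3 → Fin 3 → ℝ := fun i j => (eLpNorm (S i j) 2 volume).toReal
  let f : Fin 3 → ℝ := fun i => (eLpNorm (F i) (ENNReal.ofReal (6 / 5)) volume).toReal
  have ha : ∀ i j, 0 ≤ a i j := fun i j => ENNReal.toReal_nonneg
  have hs : ∀ i j, 0 ≤ s i j := fun i j => ENNReal.toReal_nonneg
  have hf : ∀ i, 0 ≤ f i := fun i => ENNReal.toReal_nonneg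
  refine ⟨(∑ i, ∑ j, s i j) + (∑ i, f i * K) + ∑ i, ∑ j, a i j, ?_, ?_⟩
  · have h1 : 0 ≤ ∑ i, ∑ j, s i j := Finset.sum_nonneg fun i _ => Finset.sum_nonneg fun j _ => hs i j
    have h2 : 0 ≤ ∑ i, ∑ j, a i j := Finset.sum_nonneg fun i _ => Finset.sum_nonneg fun j _ => ha i j
    have h3 : 0 ≤ ∑ i, f i * K := Finset.sum_nonneg fun i _ => mul_nonneg (hf i) hK
    linarith
  intro φ hφ
  haveI : ENNReal.HolderTriple (ENNReal.ofReal (6 / 5)) 6 1 := by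
    have : (6 : ENNReal) = ENNReal.ofReal 6 := by norm_num
    constructor
    rw [this, ← ENNReal.ofReal_inv_of_pos (by norm_num), ← ENNReal.ofReal_inv_of_pos (by norm_num),
      ← ENNReal.ofReal_add (by norm_num) (by norm_num)]
    norm_num
  have hφi : ∀ i, ContDiff ℝ 1 (fun x => φ x i) := fun i => (contDiff_pi.1 hφ.1) i
  have hφc : ∀ i, HasCompactSupport (fun x => φ x i) := fun i => by
    apply hφ.2.1.mono
    intro x hx h0
    apply hx
    simp [h0]
  have hT : ∀ i j, MemLp (fun x => tgrad φ x i j) 2 volume := fun i j =>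
    (hsob _ (hφi i) (hφc i)).2.1 j
  have hφ6 : ∀ i, MemLp (fun x => φ x i) 6 volume := fun i => (hsob _ (hφi i) (hφc i)).1
  set N : Fin 3 → Fin 3 → ℝ := fun i j => (eLpNorm (fun x => tgrad φ x i j) 2 volume).toReal with hN
  have hN0 : ∀ i j, 0 ≤ N i j := fun i j => ENNReal.toReal_nonneg
  set M : ℝ := ∑ i, ∑ j, N i j with hM
  have hrow : ∀ i, ∑ j, N i j ≤ M := fun i =>
    Finset.single_le_sum (f := fun i => ∑ j, N i j)
      (fun i _ => Finset.sum_nonneg fun j _ => hN0 i j) (Finset.mem_univ i)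
  have hNM : ∀ i j, N i j ≤ M := fun i j =>
    (Finset.single_le_sum (fun j _ => hN0 i j) (Finset.mem_univ j)).trans (hrow i)
  have h6 : ∀ i, (eLpNorm (fun x => φ x i) 6 volume).toReal ≤ K * M := fun i =>
    (hsob _ (hφi i) (hφc i)).2.2.trans (mul_le_mul_of_nonneg_left (hrow i) hK)
  have bA := fun i j => holder_bound (hA i j) (hT i j)
  have bS := fun i j => holder_bound (hS i j) (hT i j)
  have bF := fun i => holder_bound (hF i) (hφ6 i)
  have sum2 : ∀ (X : Fin 3 → Fin 3 → E3 → ℝ),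
      (∀ i j, Integrable (fun x => X i j x * tgrad φ x i j) volume ∧
        |∫ x, X i j x * tgrad φ x i j| ≤ (eLpNorm (X i j) 2 volume).toReal * N i j) →
      |∫ x, ∑ i, ∑ j, X i j x * tgrad φ x i j|
        ≤ (∑ i, ∑ j, (eLpNorm (X i j) 2 volume).toReal) * M := by
    intro X hX
    rw [integral_finsetSum _ fun i _ => integrable_finsetSum _ fun j _ => (hX i j).1,
      Finset.sum_mul]
    refine (Finset.abs_sum_le_sum_abs _ _).trans (Finset.sum_le_sum fun i _ => ?_)
    rw [integral_finsetSum _ fun j _ => (hX i j).1, Finset.sum_mul]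
    refine (Finset.abs_sum_le_sum_abs _ _).trans (Finset.sum_le_sum fun j _ => ?_)
    exact (hX i j).2.trans (mul_le_mul_of_nonneg_left (hNM i j) ENNReal.toReal_nonneg)
  have eA := sum2 A bA
  have eS := sum2 S bS
  have eF : |∫ x, ∑ i, F i x * φ x i| ≤ (∑ i, f i * K) * M := by
    rw [integral_finsetSum _ fun i _ => (bF i).1, Finset.sum_mul]
    refine (Finset.abs_sum_le_sum_abs _ _).trans (Finset.sum_le_sum fun i _ => ?_)
    rw [mul_assoc]
    exact (bF i).2.trans (mul_le_mul_of_nonneg_left (h6 i) (hf i))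
  have iA : Integrable (fun x => ∑ i, ∑ j, A i j x * tgrad φ x i j) volume :=
    integrable_finsetSum _ fun i _ => integrable_finsetSum _ fun j _ => (bA i j).1
  have iP : Integrable (fun x => p x * ∑ i, tgrad φ x i i) volume := by
    have hcont : ∀ i, Continuous (fun x => tgrad φ x i i) := fun i =>
      ((hφi i).continuous_fderiv (by norm_num)).clm_apply continuous_const
    have hcs : ∀ i, HasCompactSupport (fun x => tgrad φ x i i) := fun i => by
      apply ((hφc i).fderiv (𝕜 := ℝ)).mono
      intro x hx h0
      apply hx
      simp [tgrad, pd, h0]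
    have : MemLp (fun x => ∑ i, tgrad φ x i i) ⊤ volume :=
      memLp_finsetSum _ fun i _ => (hcont i).memLp_of_hasCompactSupport (hcs i)
    exact hp.mul_of_top_left this
  have h := hmom φ hφ
  rw [integral_add iA iP] at h
  have h' : ∫ x, p x * ∑ i, tgrad φ x i i = (∫ x, ∑ i, ∑ j, S i j x * tgrad φ x i j)
      - (∫ x, ∑ i, F i x * φ x i) - ∫ x, ∑ i, ∑ j, A i j x * tgrad φ x i j := by linarith
  rw [h', add_mul, add_mul]
  refine (abs_sub _ _).trans (add_le_add ((abs_sub _ _).trans (add_le_add eS eF)) eA)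

/-- **Corollary.** Let `(ρ, u)` be a weak solution of the stationary isentropic system on `ℝ³`
with `γ ≥ 6` and `G ∈ D₀^{1,q}(ℝ³)` for some `6γ/(5γ−6) ≤ q ≤ 3/2`.
If `ρ ∈ L⁶ ∩ L^γ(ℝ³)`, then `ρ ∈ L^{2γ}(ℝ³)`. -/
theorem higher_integrability_L6_Lgamma
    (μ η γ q : ℝ) (hμ : 0 < μ) (hη : 0 ≤ η) (hγ : 6 ≤ γ)
    (hq1 : 6 * γ / (5 * γ - 6) ≤ q) (hq2 : q ≤ 3 / 2)
    (G : E3 → ℝ) (dG : E3 → Fin 3 → ℝ)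
    (ρ : E3 → ℝ) (u : E3 → Fin 3 → ℝ) (du : E3 → Fin 3 → Fin 3 → ℝ)
    (hG : MemD01q univ G dG q)
    (hsol : IsentropicWeakSolution μ η γ G dG ρ u du)
    (hρ6 : MemLp ρ 6 volume) (hργ : MemLp ρ (ENNReal.ofReal γ) volume) :
    MemLp ρ (ENNReal.ofReal (2 * γ)) volume := by
  have hγ0 : 0 < γ := by linarith
  have hnn : ∀ᵐ x, 0 ≤ ρ x := by simpa using hsol.ρ_nonneg
  have hpeq : (fun x => ‖ρ x‖ ^ γ) =ᵐ[volume] fun x => ρ x ^ γ := by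
    filter_upwards [hnn] with x hx
    rw [Real.norm_eq_abs, abs_of_nonneg hx]
  -- the pressure is integrable
  have hp1 : Integrable (fun x => ρ x ^ γ) volume := by
    have := hργ.integrable_norm_rpow (by simpa using hγ0) ENNReal.ofReal_ne_top
    rw [ENNReal.toReal_ofReal hγ0.le] at this
    exact this.congr hpeq
  -- the velocity is in `L⁶`
  have hu6 : MemLp u 6 volume := by
    obtain ⟨un, hun, -, hlim⟩ := hsol.u_D012.2.2.2
    rw [Measure.restrict_univ] at hlim
    obtain ⟨n, hn⟩ := (hlim.eventually (gt_mem_nhds (zero_lt_one))).exists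
    have h1 : MemLp (un n) 6 volume :=
      (hun n).1.continuous.memLp_of_hasCompactSupport (hun n).2.1
    have h2 : MemLp (fun x => un n x - u x) 6 volume :=
      ⟨h1.1.sub hsol.aemeas_u.aestronglyMeasurable, hn.trans ENNReal.one_lt_top⟩
    have h3 := h1.sub h2
    refine (memLp_congr_ae (Eventually.of_forall fun x => ?_)).1 h3
    simp
  have hui : ∀ i, MemLp (fun x => u x i) 6 volume := fun i => memLp_pi_iff.1 hu6 i
  have hdu : MemLp du 2 volume := by simpa using hsol.u_D012.2.2.1
  have hdui : ∀ i j, MemLp (fun x => du x i j) 2 volume := fun i j =>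
    memLp_pi_iff.1 (memLp_pi_iff.1 hdu i) j
  have hdG : MemLp dG (ENNReal.ofReal q) volume := by simpa using hG.2.1
  have hdGi : ∀ i, MemLp (fun x => dG x i) (ENNReal.ofReal q) volume := fun i => memLp_pi_iff.1 hdG i
  -- exponents
  have h5 : 0 < 5 * γ - 6 := by linarith
  have hq65 : 6 / 5 < q := by
    refine lt_of_lt_of_le ?_ hq1
    rw [div_lt_div_iff₀ (by norm_num) h5]
    linarith
  have hq0 : 0 < q := by linarith
  have h5q : 0 < 5 * q - 6 := by linarith
  have hr1 : 6 ≤ 6 * q / (5 * q - 6) := by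
    rw [le_div_iff₀ h5q]
    linarith
  have hr2 : 6 * q / (5 * q - 6) ≤ γ := by
    rw [div_le_iff₀ h5] at hq1
    rw [div_le_iff₀ h5q]
    linarith
  have h6 : (6 : ENNReal) = ENNReal.ofReal 6 := by norm_num
  have hρr : MemLp ρ (ENNReal.ofReal (6 * q / (5 * q - 6))) volume :=
    memLp_between (by norm_num) hr1 hr2 (by rwa [← h6]) hργ
  haveI t1 : ENNReal.HolderTriple (ENNReal.ofReal (6 * q / (5 * q - 6))) (ENNReal.ofReal q)
      (ENNReal.ofReal (6 / 5)) := by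
    have hr0 : 0 < 6 * q / (5 * q - 6) := by linarith
    constructor
    rw [← ENNReal.ofReal_inv_of_pos hr0, ← ENNReal.ofReal_inv_of_pos hq0,
      ← ENNReal.ofReal_inv_of_pos (by norm_num), ← ENNReal.ofReal_add (by positivity) (by positivity)]
    congr 1
    field_simp
    ring
  haveI t2 : ENNReal.HolderTriple 6 6 3 := by
    have h3 : (3 : ENNReal) = ENNReal.ofReal 3 := by norm_num
    constructor
    rw [h6, h3, ← ENNReal.ofReal_inv_of_pos (by norm_num), ← ENNReal.ofReal_inv_of_pos (by norm_num),
      ← ENNReal.ofReal_add (by norm_num) (by norm_num)]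
    norm_num
  haveI t3 : ENNReal.HolderTriple 3 6 2 := by
    have h3 : (3 : ENNReal) = ENNReal.ofReal 3 := by norm_num
    have h2 : (2 : ENNReal) = ENNReal.ofReal 2 := by norm_num
    constructor
    rw [h6, h3, h2, ← ENNReal.ofReal_inv_of_pos (by norm_num),
      ← ENNReal.ofReal_inv_of_pos (by norm_num), ← ENNReal.ofReal_inv_of_pos (by norm_num),
      ← ENNReal.ofReal_add (by norm_num) (by norm_num)]
    norm_num
  have hA : ∀ i j, MemLp (fun x => ρ x * u x i * u x j) 2 volume := fun i j => by
    have h1 : MemLp (fun x => ρ x * u x i) 3 volume := (hui i).mul' hρ6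
    exact (hui j).mul' h1
  have hF : ∀ i, MemLp (fun x => ρ x * dG x i) (ENNReal.ofReal (6 / 5)) volume := fun i =>
    (hdGi i).mul' hρr
  have hS : ∀ i j, MemLp (fun x => Smat μ η (du x) i j) 2 volume := fun i j => by
    have htr : MemLp (fun x => ∑ k, du x k k) 2 volume := memLp_finsetSum _ fun k _ => hdui k k
    have h1 := (((hdui i j).add (hdui j i)).sub
      ((htr.const_mul (2 / 3)).mul_const (if i = j then (1 : ℝ) else 0))).const_mul μ
    exact h1.add ((htr.const_mul η).mul_const (if i = j then (1 : ℝ) else 0))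
  obtain ⟨C, hC, H⟩ := div_bound_of_data (fun x => ρ x ^ γ) hp1
    (fun i j x => ρ x * u x i * u x j) (fun i j x => Smat μ η (du x) i j)
    (fun i x => ρ x * dG x i) hA hS hF
    (fun φ hφ => by simpa only [Measure.restrict_univ] using hsol.momentum φ hφ)
  have hp2 := memLp_two_of_div_bound _ hp1 C hC H
  have hp2' : MemLp (fun x => ‖ρ x‖ ^ γ) 2 volume := (memLp_congr_ae hpeq).2 hp2
  have hmain := (memLp_norm_rpow_iff (p := ENNReal.ofReal (2 * γ)) (q := ENNReal.ofReal γ)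
    hρ6.1 (by simpa using hγ0) ENNReal.ofReal_ne_top).1
  apply hmain
  rw [ENNReal.toReal_ofReal hγ0.le, ← ENNReal.ofReal_div_of_pos hγ0, mul_div_assoc,
    div_self hγ0.ne']
  simpa using hp2'
end
end

section
/- Let (ρ, u) be a weak solution of the stationary isentropic Navier–Stokes system on ℝ³ with exponent γ ≥ 6 and potential G ∈ D₀^{1, 6γ/(5γ−6)}(ℝ³). If ∫_{ℝ³} ( (1/2) ρ|u|² + ρ^γ/(γ−1) ) dx < ∞, then ρ ∈ L^{2γ}(ℝ³). -/
noncomputable section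

open MeasureTheory Metric Filter Topology Set

/-- Smooth functions. -/
def Sm (f : E3 → ℝ) : Prop := ContDiff ℝ ((⊤ : ℕ∞) : WithTop ℕ∞) f

/-- Laplacian. -/
def Lap (f : E3 → ℝ) : E3 → ℝ := fun x => ∑ i, pd (pd f i) i x

lemma Sm.diff {f : E3 → ℝ} (hf : Sm f) : Differentiable ℝ f :=
  ContDiff.differentiable hf (by simp)

lemma Sm.cont {f : E3 → ℝ} (hf : Sm f) : Continuous f := ContDiff.continuous hf

lemma Sm.pd {f : E3 → ℝ} (hf : Sm f) (i : Fin 3) : Sm (pd f i) := by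
  have h : ContDiff ℝ ((⊤ : ℕ∞) : WithTop ℕ∞) (fderiv ℝ f) :=
    ContDiff.fderiv_right hf (by simp)
  exact h.clm_apply contDiff_const

lemma Sm.mul {f g : E3 → ℝ} (hf : Sm f) (hg : Sm g) : Sm (fun x => f x * g x) :=
  ContDiff.mul hf hg

lemma Sm.lap {f : E3 → ℝ} (hf : Sm f) : Sm (Lap f) := by
  unfold Sm Lap
  exact ContDiff.sum fun i _ => (hf.pd i).pd i

lemma cs_pd {f : E3 → ℝ} (hf : HasCompactSupport f) (i : Fin 3) : HasCompactSupport (pd f i) :=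
  hf.fderiv_apply ℝ _

lemma cs_lap {f : E3 → ℝ} (hf : HasCompactSupport f) : HasCompactSupport (Lap f) := by
  have : Lap f = fun x => pd (pd f 0) 0 x + pd (pd f 1) 1 x + pd (pd f 2) 2 x := by
    ext x; simp [Lap, Fin.sum_univ_three]
  rw [this]
  exact ((cs_pd (cs_pd hf 0) 0).add (cs_pd (cs_pd hf 1) 1)).add (cs_pd (cs_pd hf 2) 2)

lemma pd_comm {f : E3 → ℝ} (hf : Sm f) (i j : Fin 3) : pd (pd f i) j = pd (pd f j) i := by
  have h : ContDiff ℝ ((⊤ : ℕ∞) : WithTop ℕ∞) (fderiv ℝ f) :=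
    ContDiff.fderiv_right hf (by simp)
  have hd : Differentiable ℝ (fderiv ℝ f) := h.differentiable (by simp)
  have key : ∀ (v w : E3) x, fderiv ℝ (fun y => fderiv ℝ f y v) x w = fderiv ℝ (fderiv ℝ f) x w v := by
    intro v w x
    rw [fderiv_clm_apply (hd x) (by fun_prop)]
    simp
  ext x
  unfold pd
  rw [key, key]
  have hs : IsSymmSndFDerivAt ℝ f x := by
    apply (ContDiff.contDiffAt hf).isSymmSndFDerivAt
    simp
    exact WithTop.coe_le_coe.2 (le_top : (2 : ℕ∞) ≤ ⊤)
  exact hs _ _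

lemma pd_mul {f g : E3 → ℝ} (hf : Sm f) (hg : Sm g) (i : Fin 3) (x : E3) :
    pd (fun x => f x * g x) i x = pd f i x * g x + f x * pd g i x := by
  unfold pd
  rw [fderiv_fun_mul (hf.diff x) (hg.diff x)]
  simp
  ring

lemma int_cs {f : E3 → ℝ} (hf : Sm f) (hc : HasCompactSupport f) : Integrable f volume :=
  hf.cont.integrable_of_hasCompactSupport hc

lemma ibp {f g : E3 → ℝ} (hf : Sm f) (hg : Sm g) (hc : HasCompactSupport f) (i : Fin 3) :
    ∫ x, f x * pd g i x = - ∫ x, pd f i x * g x := by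
  unfold pd
  apply integral_mul_fderiv_eq_neg_fderiv_mul_of_integrable
  · exact int_cs ((hf.pd i).mul hg) ((cs_pd hc i).mul_right)
  · exact int_cs (hf.mul (hg.pd i)) (hc.mul_right)
  · exact int_cs (hf.mul hg) (hc.mul_right)
  · exact fun x _ => hf.diff x
  · exact fun x _ => hg.diff x

lemma hess_eq {χ : E3 → ℝ} (hf : Sm χ) (hc : HasCompactSupport χ) (i j : Fin 3) :
    ∫ x, pd (pd χ i) j x * pd (pd χ i) j x = ∫ x, pd (pd χ i) i x * pd (pd χ j) j x := by
  have h1 := ibp (((hf.pd i).pd j)) (hf.pd i) (cs_pd (cs_pd hc i) j) j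
  have h2 := ibp (((hf.pd j).pd j)) (hf.pd i) (cs_pd (cs_pd hc j) j) i
  have h3 : pd (pd (pd χ i) j) j = pd (pd (pd χ j) j) i := by
    rw [pd_comm hf i j, pd_comm (hf.pd j) i j]
  rw [h3] at h1
  rw [h1, ← h2]
  congr 1; ext x; ring

lemma hess_sum {χ : E3 → ℝ} (hf : Sm χ) (hc : HasCompactSupport χ) :
    ∑ i, ∑ j, ∫ x, pd (pd χ i) j x * pd (pd χ i) j x = ∫ x, Lap χ x * Lap χ x := by
  simp_rw [hess_eq hf hc]
  have hI : ∀ i j, Integrable (fun x => pd (pd χ i) i x * pd (pd χ j) j x) := fun i j =>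
    int_cs (((hf.pd i).pd i).mul ((hf.pd j).pd j)) ((cs_pd (cs_pd hc i) i).mul_right)
  have : ∀ x, Lap χ x * Lap χ x = ∑ i, ∑ j, pd (pd χ i) i x * pd (pd χ j) j x := by
    intro x
    rw [Lap, Finset.sum_mul_sum]
  simp_rw [this]
  rw [integral_finsetSum _ fun i _ => integrable_finsetSum _ fun j _ => hI i j]
  congr 1; ext i
  rw [integral_finsetSum _ fun j _ => hI i j]

lemma memLp_cs {f : E3 → ℝ} (hf : Sm f) (hc : HasCompactSupport f) (p : ENNReal) :
    MemLp f p volume := hf.cont.memLp_of_hasCompactSupport hc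

/-- real-valued L2 norm -/
def n2 (f : E3 → ℝ) : ℝ := (eLpNorm f 2 volume).toReal

lemma n2_sq {f : E3 → ℝ} (hf : MemLp f 2 volume) : n2 f ^ 2 = ∫ x, f x * f x := by
  unfold n2
  have h := hf.eLpNorm_eq_integral_rpow_norm (by simp) (by simp)
  have h0 : 0 ≤ ∫ x, f x * f x := integral_nonneg fun x => mul_self_nonneg _
  have h2 : ∀ x, ‖f x‖ ^ (2 : ENNReal).toReal = f x * f x := by
    intro x; simp; ring
  simp_rw [h2] at h
  rw [h, ENNReal.toReal_ofReal (by positivity), ← Real.rpow_natCast, ← Real.rpow_mul h0]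
  simp

lemma n2_nonneg (f : E3 → ℝ) : 0 ≤ n2 f := ENNReal.toReal_nonneg

lemma n2_hess_le {χ : E3 → ℝ} (hf : Sm χ) (hc : HasCompactSupport χ) (i j : Fin 3) :
    n2 (pd (pd χ i) j) ≤ n2 (Lap χ) := by
  have h := hess_sum hf hc
  have hnn : ∀ i j, 0 ≤ ∫ x, pd (pd χ i) j x * pd (pd χ i) j x :=
    fun i j => integral_nonneg fun x => mul_self_nonneg _
  have h1 : ∫ x, pd (pd χ i) j x * pd (pd χ i) j x ≤ ∫ x, Lap χ x * Lap χ x := by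
    rw [← h]
    refine le_trans ?_ (Finset.single_le_sum (f := fun i => ∑ j, ∫ x, pd (pd χ i) j x * pd (pd χ i) j x)
      (fun i _ => Finset.sum_nonneg fun j _ => hnn i j) (Finset.mem_univ i))
    exact Finset.single_le_sum (f := fun j => ∫ x, pd (pd χ i) j x * pd (pd χ i) j x)
      (fun j _ => hnn i j) (Finset.mem_univ j)
  rw [← n2_sq (memLp_cs ((hf.pd i).pd j) (cs_pd (cs_pd hc i) j) 2),
    ← n2_sq (memLp_cs hf.lap (cs_lap hc) 2)] at h1
  exact (sq_le_sq₀ (n2_nonneg _) (n2_nonneg _)).1 h1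

lemma holder_int {f g : E3 → ℝ} {p q : ENNReal} [ENNReal.HolderTriple p q 1]
    (hf : MemLp f p volume) (hg : MemLp g q volume) :
    Integrable (fun x => f x * g x) ∧
    |∫ x, f x * g x| ≤ (eLpNorm f p volume).toReal * (eLpNorm g q volume).toReal := by
  refine ⟨memLp_one_iff_integrable.1 (hg.mul' hf), ?_⟩
  rw [← ENNReal.toReal_mul, ← Real.norm_eq_abs, ← toReal_enorm]
  apply ENNReal.toReal_mono (ENNReal.mul_ne_top hf.eLpNorm_ne_top hg.eLpNorm_ne_top)
  refine (enorm_integral_le_lintegral_enorm _).trans ?_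
  rw [← eLpNorm_one_eq_lintegral_enorm]
  have := eLpNorm_smul_le_mul_eLpNorm (p := p) (q := q) (r := 1) hg.1 hf.1
  exact this

lemma clm_norm_le (L : E3 →L[ℝ] ℝ) : ‖L‖ ≤ ∑ i, ‖L (EuclideanSpace.single i 1)‖ := by
  apply L.opNorm_le_bound (by positivity)
  intro x
  have hx : x = ∑ i, x i • (EuclideanSpace.single i 1 : E3) := by
    ext j
    simp [Finset.sum_apply, Pi.single_apply]
  conv_lhs => rw [hx, map_sum]
  refine (norm_sum_le _ _).trans ?_
  rw [Finset.sum_mul]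
  apply Finset.sum_le_sum
  intro i _
  rw [map_smul, norm_smul, mul_comm]
  gcongr
  exact PiLp.norm_apply_le x i

lemma sobolev : ∃ C : ℝ, 0 ≤ C ∧ ∀ f : E3 → ℝ, Sm f → HasCompactSupport f →
    (eLpNorm f 6 volume).toReal ≤ C * ∑ i, n2 (pd f i) := by
  refine ⟨SNormLESNormFDerivOfEqConst ℝ (volume : Measure E3) 2, by positivity, ?_⟩
  intro f hf hc
  have h := eLpNorm_le_eLpNorm_fderiv_of_eq (volume : Measure E3) (F := ℝ) (u := f) (p := 2) (p' := 6)
    (ContDiff.of_le hf (by exact_mod_cast le_top)) hc (by norm_num) (by simp)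
    (by simp; norm_num)
  have hm : ∀ i, MemLp (pd f i) 2 volume := fun i => memLp_cs (hf.pd i) (cs_pd hc i) 2
  have h2 : eLpNorm (fderiv ℝ f) 2 volume ≤ ∑ i, eLpNorm (pd f i) 2 volume := by
    calc eLpNorm (fderiv ℝ f) 2 volume ≤ eLpNorm (∑ i, fun x => ‖pd f i x‖) 2 volume := by
          apply eLpNorm_mono_real
          intro x
          simp only [Finset.sum_apply]
          exact clm_norm_le _
      _ ≤ ∑ i, eLpNorm (fun x => ‖pd f i x‖) 2 volume := by
          apply eLpNorm_sum_le
          · exact fun i _ => (hm i).1.norm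
          · norm_num
      _ = _ := by simp_rw [eLpNorm_norm]
  have h3 : eLpNorm f 6 volume ≤ SNormLESNormFDerivOfEqConst ℝ (volume : Measure E3) 2 *
      ∑ i, eLpNorm (pd f i) 2 volume := by
    refine le_trans ?_ (mul_le_mul_right h2 _)
    exact_mod_cast h
  have h4 : ∑ i, eLpNorm (pd f i) 2 volume ≠ ⊤ :=
    ENNReal.sum_ne_top.2 fun i _ => (hm i).eLpNorm_ne_top
  have h5 := ENNReal.toReal_mono (ENNReal.mul_ne_top ENNReal.coe_ne_top h4) h3
  rw [ENNReal.toReal_mul, ENNReal.toReal_sum fun i _ => (hm i).eLpNorm_ne_top] at h5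
  exact h5

lemma riesz_ext {T H : Type*} [AddCommGroup T] [Module ℝ T] [NormedAddCommGroup H]
    [InnerProductSpace ℝ H] [CompleteSpace H] (L : T →ₗ[ℝ] H) (l : T →ₗ[ℝ] ℝ) (C : ℝ)
    (h : ∀ t, |l t| ≤ C * ‖L t‖) : ∃ g : H, ∀ t, l t = inner ℝ g (L t) := by
  have hker : LinearMap.ker L ≤ LinearMap.ker l := by
    intro t ht
    rw [LinearMap.mem_ker] at ht ⊢
    have := h t
    rw [ht, norm_zero, mul_zero] at this
    exact abs_eq_zero.1 (le_antisymm this (abs_nonneg _))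
  let f : LinearMap.range L →ₗ[ℝ] ℝ :=
    ((LinearMap.ker L).liftQ l hker).comp L.quotKerEquivRange.symm.toLinearMap
  have hf : ∀ t, f ⟨L t, LinearMap.mem_range_self L t⟩ = l t := by
    intro t
    have : L.quotKerEquivRange.symm ⟨L t, LinearMap.mem_range_self L t⟩ =
        (LinearMap.ker L).mkQ t := L.quotKerEquivRange_symm_apply_image t _
    simp [f, this]
  let F : LinearMap.range L →L[ℝ] ℝ := f.mkContinuous C (by
    rintro ⟨y, t, rfl⟩
    rw [hf t]
    exact h t)
  obtain ⟨g, hg, -⟩ := exists_extension_norm_eq (LinearMap.range L) F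
  refine ⟨(InnerProductSpace.toDual ℝ H).symm g, fun t => ?_⟩
  rw [InnerProductSpace.toDual_symm_apply, ← hf t]
  exact (hg ⟨L t, LinearMap.mem_range_self L t⟩).symm

lemma pd_scale {f : E3 → ℝ} (hf : Sm f) (c : ℝ) (i : Fin 3) :
    pd (fun x => f (c • x)) i = fun x => c * pd f i (c • x) := by
  ext x
  unfold pd
  have h1 : HasFDerivAt (fun x : E3 => c • x) (c • ContinuousLinearMap.id ℝ E3) x :=
    (hasFDerivAt_id x).const_smul c
  have := ((hf.diff (c • x)).hasFDerivAt).comp x h1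
  rw [show (fun x => f (c • x)) = f ∘ (fun x => c • x) from rfl, this.fderiv]
  simp

lemma pd_const_mul {f : E3 → ℝ} (hf : Sm f) (c : ℝ) (i : Fin 3) :
    pd (fun x => c * f x) i = fun x => c * pd f i x := by
  ext x
  unfold pd
  rw [fderiv_const_mul (hf.diff x)]
  simp

lemma Sm.scale {f : E3 → ℝ} (hf : Sm f) (c : ℝ) : Sm (fun x => f (c • x)) :=
  ContDiff.comp hf (contDiff_const_smul c)

lemma lap_scale {f : E3 → ℝ} (hf : Sm f) (c : ℝ) :
    Lap (fun x => f (c • x)) = fun x => c ^ 2 * Lap f (c • x) := by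
  ext x
  unfold Lap
  rw [Finset.mul_sum]
  congr 1; ext i
  rw [pd_scale hf, pd_const_mul ((hf.pd i).scale c), pd_scale (hf.pd i)]
  ring

/-- Bochner-type identity for harmonic functions. -/
lemma harm_energy {h ζ : E3 → ℝ} (hh : Sm h) (hz : Sm ζ) (hc : HasCompactSupport ζ)
    (hl : ∀ x, Lap h x = 0) :
    ∫ x, ζ x * (2 * ∑ i, pd h i x * pd h i x) = ∫ x, Lap ζ x * (h x * h x) := by
  have hsq : Sm (fun x => h x * h x) := hh.mul hh
  have e1 : ∀ i, pd (fun x => h x * h x) i = fun x => 2 * (h x * pd h i x) := by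
    intro i; ext x; rw [pd_mul hh hh]; ring
  have e2 : ∀ i x, pd (pd (fun x => h x * h x) i) i x
      = 2 * (pd h i x * pd h i x + h x * pd (pd h i) i x) := by
    intro i x
    rw [e1, pd_const_mul (hh.mul (hh.pd i))]
    simp only [pd_mul hh (hh.pd i)]
  have e3 : ∀ x, ζ x * (2 * ∑ i, pd h i x * pd h i x)
      = ∑ i, ζ x * pd (pd (fun x => h x * h x) i) i x := by
    intro x
    simp_rw [e2, ← Finset.mul_sum, Finset.sum_add_distrib, ← Finset.mul_sum]
    have := hl x
    unfold Lap at this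
    rw [this]; ring
  simp_rw [e3]
  rw [integral_finsetSum _ fun i _ => int_cs (hz.mul ((hsq.pd i).pd i)) hc.mul_right]
  have e4 : ∀ x, Lap ζ x * (h x * h x) = ∑ i, pd (pd ζ i) i x * (h x * h x) := by
    intro x; rw [Lap, Finset.sum_mul]
  simp_rw [e4]
  rw [integral_finsetSum _ fun i _ =>
    int_cs (((hz.pd i).pd i).mul hsq) (cs_pd (cs_pd hc i) i).mul_right]
  congr 1; ext i
  rw [ibp hz (hsq.pd i) hc, ibp (hz.pd i) hsq (cs_pd hc i), neg_neg]

lemma liouville {h : E3 → ℝ} (hh : Sm h) (hl : ∀ x, Lap h x = 0)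
    (hi : Integrable (fun x => h x * h x)) : ∀ x, h x = 0 := by
  let b : ContDiffBump (0 : E3) := ⟨1, 2, by norm_num, by norm_num⟩
  have hb : Sm (b : E3 → ℝ) := b.contDiff
  have hbc : HasCompactSupport (b : E3 → ℝ) := b.hasCompactSupport
  obtain ⟨M, hM⟩ := hb.lap.cont.bounded_above_of_compact_support (cs_lap hbc)
  have hM0 : 0 ≤ M := (norm_nonneg _).trans (hM 0)
  set I := ∫ x, h x * h x with hI
  have hI0 : 0 ≤ I := integral_nonneg fun x => mul_self_nonneg _
  let e : E3 → ℝ := fun x => 2 * ∑ i, pd h i x * pd h i x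
  have he0 : ∀ x, 0 ≤ e x := fun x => by
    have : 0 ≤ ∑ i, pd h i x * pd h i x := Finset.sum_nonneg fun i _ => mul_self_nonneg _
    simp only [e]; linarith
  have hec : Continuous e := by
    have := fun i => (hh.pd i).cont
    fun_prop
  -- scaled estimate
  have key : ∀ n : ℕ, ∫ x, b (((n : ℝ) + 1)⁻¹ • x) * e x ≤ (((n : ℝ) + 1)⁻¹) ^ 2 * (M * I) := by
    intro n
    set c := ((n : ℝ) + 1)⁻¹ with hcdef
    have hcpos : 0 < c := by positivity
    have hzc : HasCompactSupport (fun x => b (c • x)) :=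
      hbc.comp_homeomorph (Homeomorph.smulOfNeZero c hcpos.ne')
    have hintg : Integrable (fun x => Lap (fun x => b (c • x)) x * (h x * h x)) :=
      int_cs ((hb.scale c).lap.mul (hh.mul hh)) (cs_lap hzc).mul_right
    rw [harm_energy hh (hb.scale c) hzc hl]
    rw [lap_scale hb] at hintg ⊢
    have : (c ^ 2 * (M * I)) = ∫ x, c ^ 2 * (M * (h x * h x)) := by
      rw [integral_const_mul, integral_const_mul]
    rw [this]
    apply integral_mono hintg ((hi.const_mul M).const_mul (c ^ 2))
    intro x
    have h1 : Lap b (c • x) ≤ M := (le_abs_self _).trans (hM _)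
    have h2 : Lap b (c • x) * (h x * h x) ≤ M * (h x * h x) :=
      mul_le_mul_of_nonneg_right h1 (mul_self_nonneg _)
    simp only [mul_assoc]
    exact mul_le_mul_of_nonneg_left h2 (by positivity)
  have hball : ∀ R : ℕ, ∫ x in ball (0 : E3) R, e x = 0 := by
    intro R
    have h0 : 0 ≤ ∫ x in ball (0 : E3) R, e x := integral_nonneg he0
    refine le_antisymm ?_ h0
    have hlim : Tendsto (fun n : ℕ => (((n : ℝ) + 1)⁻¹) ^ 2 * (M * I)) atTop (𝓝 0) := by
      have := (tendsto_one_div_add_atTop_nhds_zero_nat (𝕜 := ℝ))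
      simp only [one_div] at this
      simpa using (this.pow 2).mul_const (M * I)
    refine ge_of_tendsto hlim ?_
    filter_upwards [eventually_ge_atTop R] with n hn
    refine le_trans ?_ (key n)
    have hcpos : 0 < ((n : ℝ) + 1)⁻¹ := by positivity
    have hzc : HasCompactSupport (fun x => b (((n : ℝ) + 1)⁻¹ • x)) :=
      hbc.comp_homeomorph (Homeomorph.smulOfNeZero _ hcpos.ne')
    have hintg : Integrable (fun x => b (((n : ℝ) + 1)⁻¹ • x) * e x) :=
      ((hb.scale _).cont.mul hec).integrable_of_hasCompactSupport hzc.mul_right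
    rw [← integral_indicator measurableSet_ball]
    apply integral_mono_of_nonneg
    · exact Eventually.of_forall fun x => indicator_nonneg (fun x _ => he0 x) x
    · exact hintg
    · refine Eventually.of_forall fun x => ?_
      by_cases hx : x ∈ ball (0 : E3) R
      · have : b (((n : ℝ) + 1)⁻¹ • x) = 1 := by
          apply b.one_of_mem_closedBall
          simp only [mem_closedBall, dist_zero_right, b, norm_smul, mem_ball] at hx ⊢
          rw [Real.norm_of_nonneg hcpos.le, inv_mul_le_iff₀ (by positivity)]
          have : (R : ℝ) ≤ n := by exact_mod_cast hn
          linarith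
        simp [hx, this]
      · simp only [indicator_of_notMem hx]
        exact mul_nonneg b.nonneg (he0 x)
  have hez : ∀ x, e x = 0 := by
    intro x
    obtain ⟨R, hR⟩ := exists_nat_gt ‖x‖
    by_contra hne
    have hpos : 0 < ∫ x in ball (0 : E3) R, e x := by
      have hio : IntegrableOn e (ball (0 : E3) R) :=
        (hec.continuousOn.integrableOn_compact (isCompact_closedBall (0 : E3) R)).mono_set
          ball_subset_closedBall
      rw [setIntegral_pos_iff_support_of_nonneg_ae (Eventually.of_forall he0) hio]
      have ho : IsOpen (Function.support e ∩ ball (0 : E3) R) :=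
        (hec.isOpen_support).inter isOpen_ball
      exact ho.measure_pos _ ⟨x, hne, by simpa using hR⟩
    exact hpos.ne' (hball R)
  have hpd : ∀ x i, pd h i x = 0 := by
    intro x i
    have h1 := hez x
    simp only [e] at h1
    have h2 : ∑ i, pd h i x * pd h i x = 0 := by linarith
    have h3 := (Finset.sum_eq_zero_iff_of_nonneg fun i _ => mul_self_nonneg (pd h i x)).1 h2 i
      (Finset.mem_univ i)
    exact mul_self_eq_zero.1 h3
  have hfd : ∀ x, fderiv ℝ h x = 0 := by
    intro x
    have := clm_norm_le (fderiv ℝ h x)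
    have h2 : ∑ i, ‖(fderiv ℝ h x) (EuclideanSpace.single i 1)‖ = 0 := by
      apply Finset.sum_eq_zero
      intro i _
      have := hpd x i
      unfold pd at this
      rw [this, norm_zero]
    rw [h2] at this
    exact norm_le_zero_iff.1 this
  have hconst : ∀ x y, h x = h y := is_const_of_fderiv_eq_zero hh.diff hfd
  intro x
  have h1 : (fun y => h y * h y) = fun _ => h x * h x := by
    ext y; rw [hconst y x]
  rw [h1] at hi
  rcases integrable_const_iff.1 hi with h2 | h2
  · exact mul_self_eq_zero.1 h2
  · exfalso
    have := h2.measure_univ_lt_top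
    simp at this


open scoped Convolution in
/-- Convolution of a locally integrable function with a test function. -/
def cv (w φ : E3 → ℝ) : E3 → ℝ :=
  w ⋆[(ContinuousLinearMap.lsmul ℝ ℝ : ℝ →L[ℝ] ℝ →L[ℝ] ℝ).flip, volume] φ

lemma cv_apply (w φ : E3 → ℝ) (x : E3) : cv w φ x = ∫ t, w t * φ (x - t) := by
  simp [cv, convolution_def, mul_comm]

lemma cv_sm {w φ : E3 → ℝ} (hw : LocallyIntegrable w volume) (hφ : Sm φ)
    (hc : HasCompactSupport φ) : Sm (cv w φ) :=
  hc.contDiff_convolution_right _ hw hφ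

lemma cv_pd {w φ : E3 → ℝ} (hw : LocallyIntegrable w volume) (hφ : Sm φ)
    (hc : HasCompactSupport φ) (i : Fin 3) : pd (cv w φ) i = cv w (pd φ i) := by
  ext x
  have h1 : ContDiff ℝ 1 φ := ContDiff.of_le hφ (by exact_mod_cast le_top)
  have h := hc.hasFDerivAt_convolution_right
    ((ContinuousLinearMap.lsmul ℝ ℝ : ℝ →L[ℝ] ℝ →L[ℝ] ℝ).flip) hw h1 x
  rw [show pd (cv w φ) i x = fderiv ℝ (cv w φ) x (EuclideanSpace.single i 1) from rfl]
  unfold cv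
  rw [h.fderiv, convolution_precompR_apply _ hw (hc.fderiv ℝ) (h1.continuous_fderiv (by simp))]
  rfl

lemma pd_refl {f : E3 → ℝ} (hf : Sm f) (a : E3) (i : Fin 3) :
    pd (fun x => f (a - x)) i = fun x => (-1) * pd f i (a - x) := by
  ext x
  unfold pd
  have h1 : HasFDerivAt (fun x : E3 => a - x) (- ContinuousLinearMap.id ℝ E3) x :=
    (hasFDerivAt_id x).const_sub a
  have := ((hf.diff (a - x)).hasFDerivAt).comp x h1
  rw [show (fun x => f (a - x)) = f ∘ (fun x => a - x) from rfl, this.fderiv]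
  simp

lemma Sm.rflct {f : E3 → ℝ} (hf : Sm f) (a : E3) : Sm (fun x => f (a - x)) :=
  ContDiff.comp hf (contDiff_const.sub contDiff_id)

lemma lap_refl {f : E3 → ℝ} (hf : Sm f) (a : E3) :
    Lap (fun x => f (a - x)) = fun x => Lap f (a - x) := by
  ext x
  unfold Lap
  congr 1; ext i
  rw [pd_refl hf, pd_const_mul ((hf.pd i).rflct a), pd_refl (hf.pd i)]
  ring

lemma cv_lap {w φ : E3 → ℝ} (hw : LocallyIntegrable w volume) (hφ : Sm φ)
    (hc : HasCompactSupport φ) (x : E3) :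
    Lap (cv w φ) x = ∫ t, w t * Lap (fun y => φ (x - y)) t := by
  rw [lap_refl hφ]
  unfold Lap
  have hi : ∀ i, Integrable (fun t => w t * pd (pd φ i) i (x - t)) := by
    intro i
    have hc' : HasCompactSupport (fun t => pd (pd φ i) i (x - t)) :=
      (cs_pd (cs_pd hc i) i).comp_homeomorph (Homeomorph.subLeft x)
    have := hw.integrable_smul_left_of_hasCompactSupport (((hφ.pd i).pd i).rflct x).cont hc'
    refine this.congr (Eventually.of_forall fun t => ?_)
    simp [mul_comm]
  simp_rw [Finset.mul_sum]
  rw [integral_finsetSum _ fun i _ => hi i]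
  congr 1; ext i
  rw [cv_pd hw hφ hc, cv_pd hw (hφ.pd i) (cs_pd hc i), cv_apply]

lemma cv_int_sq_L1 {p φ : E3 → ℝ} (hp : Integrable p volume) (hφ : Sm φ)
    (hc : HasCompactSupport φ) : MemLp (cv p φ) 2 volume := by
  have hs := cv_sm hp.locallyIntegrable hφ hc
  have h1 : Integrable (cv p φ) volume := hp.integrable_convolution _ (int_cs hφ hc)
  obtain ⟨M, hM⟩ := hφ.cont.bounded_above_of_compact_support hc
  rw [memLp_two_iff_integrable_sq hs.cont.aestronglyMeasurable]
  have hb : ∀ x, |cv p φ x| ≤ M * ∫ t, |p t| := by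
    intro x
    rw [cv_apply, ← integral_const_mul]
    apply (abs_integral_le_integral_abs).trans
    apply integral_mono_of_nonneg
    · exact Eventually.of_forall fun t => abs_nonneg _
    · exact hp.abs.const_mul M
    · refine Eventually.of_forall fun t => ?_
      simp only [abs_mul]
      rw [mul_comm]
      exact mul_le_mul_of_nonneg_right (hM _) (abs_nonneg _)
  refine (h1.abs.const_mul (M * ∫ t, |p t|)).mono'
    (hs.cont.pow 2).aestronglyMeasurable (Eventually.of_forall fun x => ?_)
  rw [Real.norm_eq_abs, abs_pow, sq]
  exact mul_le_mul_of_nonneg_right (hb x) (abs_nonneg _)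

lemma hconv {w φ : E3 → ℝ} (hw : LocallyIntegrable w volume) (hφ : Continuous φ)
    (hc : HasCompactSupport φ) (x : E3) : Integrable (fun t => w t * φ (x - t)) volume := by
  have hc' : HasCompactSupport (fun t => φ (x - t)) :=
    hc.comp_homeomorph (Homeomorph.subLeft x)
  have := hw.integrable_smul_left_of_hasCompactSupport
    (hφ.comp (continuous_const.sub continuous_id)) hc'
  refine this.congr (Eventually.of_forall fun t => ?_)
  simp [mul_comm]

lemma cv_int_sq_L2 {g φ : E3 → ℝ} (hg : MemLp g 2 volume) (hφ : Sm φ)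
    (hc : HasCompactSupport φ) (h0 : ∀ x, 0 ≤ φ x) (h1 : ∫ x, φ x = 1) :
    MemLp (cv g φ) 2 volume := by
  have hgl : LocallyIntegrable g volume := hg.locallyIntegrable (by norm_num)
  have hs := cv_sm hgl hφ hc
  have hg2 : Integrable (fun t => g t ^ 2) volume := hg.integrable_sq
  have hbase : Integrable (cv (fun t => g t ^ 2) φ) volume :=
    hg2.integrable_convolution _ (int_cs hφ hc)
  rw [memLp_two_iff_integrable_sq hs.cont.aestronglyMeasurable]
  refine hbase.mono' (hs.cont.pow 2).aestronglyMeasurable (Eventually.of_forall fun x => ?_)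
  rw [Real.norm_of_nonneg (sq_nonneg _)]
  set A := cv g φ x with hA
  have i1 := hconv hgl hφ.cont hc x
  have i2 := hconv hg2.locallyIntegrable hφ.cont hc x
  have i3 : Integrable (fun t => φ (x - t)) volume := (int_cs hφ hc).comp_sub_left x
  have e3 : ∫ t, φ (x - t) = 1 := by rw [integral_sub_left_eq_self φ volume x, h1]
  have hnn : 0 ≤ ∫ t, (g t ^ 2 * φ (x - t) - 2 * A * (g t * φ (x - t)) + A ^ 2 * φ (x - t)) := by
    apply integral_nonneg
    intro t
    have : 0 ≤ (g t - A) ^ 2 * φ (x - t) := mul_nonneg (sq_nonneg _) (h0 _)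
    simp only [Pi.zero_apply]
    nlinarith
  have i4 : Integrable (fun t => g t ^ 2 * φ (x - t) - 2 * A * (g t * φ (x - t))) volume :=
    i2.sub (i1.const_mul _)
  rw [integral_add i4 (i3.const_mul _), integral_sub i2 (i1.const_mul _),
    integral_const_mul, integral_const_mul, e3, ← cv_apply g φ x, ← hA] at hnn
  rw [cv_apply]
  nlinarith

lemma weyl {p g : E3 → ℝ} (hp : Integrable p volume) (hg : MemLp g 2 volume)
    (h : ∀ χ, Sm χ → HasCompactSupport χ → ∫ x, p x * Lap χ x = ∫ x, g x * Lap χ x) :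
    p =ᵐ[volume] g := by
  have hpl : LocallyIntegrable p volume := hp.locallyIntegrable
  have hgl : LocallyIntegrable g volume := hg.locallyIntegrable (by norm_num)
  have hw : LocallyIntegrable (fun x => p x - g x) volume := hpl.sub hgl
  have hzero : ∀ φ, Sm φ → HasCompactSupport φ → (∀ x, 0 ≤ φ x) → ∫ x, φ x = 1 → ∀ x, cv (fun x => p x - g x) φ x = 0 := by
    intro φ hφ hc h0 h1
    apply liouville (cv_sm hw hφ hc)
    · intro x
      rw [cv_lap hw hφ hc]
      have hc' : HasCompactSupport (fun t => φ (x - t)) :=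
        hc.comp_homeomorph (Homeomorph.subLeft x)
      have := h _ (hφ.rflct x) hc'
      simp_rw [sub_mul]
      rw [integral_sub, this, sub_self]
      · rw [lap_refl hφ]; exact hconv hpl hφ.lap.cont (cs_lap hc) x
      · rw [lap_refl hφ]; exact hconv hgl hφ.lap.cont (cs_lap hc) x
    · have e : cv (fun x => p x - g x) φ = cv p φ - cv g φ := by
        ext x
        simp only [Pi.sub_apply, cv_apply, sub_mul]
        exact integral_sub (hconv hpl hφ.cont hc x) (hconv hgl hφ.cont hc x)
      have hm : MemLp (cv (fun x => p x - g x) φ) 2 volume := by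
        rw [e]; exact (cv_int_sq_L1 hp hφ hc).sub (cv_int_sq_L2 hg hφ hc h0 h1)
      simpa [sq] using hm.integrable_sq
  let b : ℕ → ContDiffBump (0 : E3) := fun n =>
    ⟨1 / ((n : ℝ) + 1), 2 * (1 / ((n : ℝ) + 1)), by positivity, by
      have : 0 < 1 / ((n : ℝ) + 1) := by positivity
      linarith⟩
  have hb0 : Tendsto (fun n => (b n).rOut) atTop (𝓝 0) := by
    have := (tendsto_one_div_add_atTop_nhds_zero_nat (𝕜 := ℝ)).const_mul 2
    rw [mul_zero] at this
    exact this
  have hae := ContDiffBump.ae_convolution_tendsto_right_of_locallyIntegrable (μ := volume)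
    (K := 2) hb0 (Eventually.of_forall fun n => le_rfl) hw
  filter_upwards [hae] with x hx
  have hz : ∀ n, convolution ((b n).normed volume) (fun x => p x - g x)
      (ContinuousLinearMap.lsmul ℝ ℝ) volume x = 0 := by
    intro n
    rw [← convolution_flip]
    exact hzero _ (b n).contDiff_normed (b n).hasCompactSupport_normed
      (b n).nonneg_normed (b n).integral_normed x
  simp_rw [hz] at hx
  have := tendsto_nhds_unique hx tendsto_const_nhds
  linarith


lemma holder65 : ENNReal.HolderTriple (ENNReal.ofReal (6 / 5)) 6 1 := ⟨by
    rw [← ENNReal.ofReal_inv_of_pos (by norm_num),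
      show (6 : ENNReal) = ENNReal.ofReal 6 by simp,
      ← ENNReal.ofReal_inv_of_pos (by norm_num), ← ENNReal.ofReal_add (by norm_num) (by norm_num)]
    norm_num⟩

lemma core {p : E3 → ℝ} (hp : Integrable p volume) {A : Fin 3 → Fin 3 → E3 → ℝ}
    (hA : ∀ i j, MemLp (A i j) 2 volume) {H : Fin 3 → E3 → ℝ}
    (hH : ∀ i, MemLp (H i) (ENNReal.ofReal (6 / 5)) volume)
    (hid : ∀ χ, Sm χ → HasCompactSupport χ → ∫ x, p x * Lap χ x =
      (∑ i, ∑ j, ∫ x, A i j x * pd (pd χ i) j x) + ∑ i, ∫ x, H i x * pd χ i x) :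
    MemLp p 2 volume := by
  obtain ⟨C, hC0, hC⟩ := sobolev
  have := holder65
  let T : Submodule ℝ (E3 → ℝ) :=
    { carrier := {χ | Sm χ ∧ HasCompactSupport χ}
      add_mem' := fun ha hb => ⟨ContDiff.add ha.1 hb.1, ha.2.add hb.2⟩
      zero_mem' := ⟨contDiff_const, HasCompactSupport.zero⟩
      smul_mem' := fun c _ ha => ⟨contDiff_const.smul ha.1, ha.2.smul_left⟩ }
  have hpd_add : ∀ {f g : E3 → ℝ}, Sm f → Sm g → ∀ i, pd (f + g) i = pd f i + pd g i := by
    intro f g hf hg i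
    ext x
    simp only [pd, Pi.add_apply]
    rw [fderiv_add (hf.diff x) (hg.diff x)]
    simp
  have hlap_add : ∀ {f g : E3 → ℝ}, Sm f → Sm g → Lap (f + g) = Lap f + Lap g := by
    intro f g hf hg
    ext x
    simp only [Lap, Pi.add_apply, hpd_add hf hg, hpd_add (hf.pd _) (hg.pd _),
      Finset.sum_add_distrib]
  have hlap_smul : ∀ {f : E3 → ℝ} (c : ℝ), Sm f → Lap (c • f) = c • Lap f := by
    intro f c hf
    ext x
    have : ∀ i, pd (pd (c • f) i) i x = c * pd (pd f i) i x := by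
      intro i
      have e : (c • f) = fun x => c * f x := by ext; simp
      rw [e, pd_const_mul hf, pd_const_mul (hf.pd i)]
    simp only [Lap, Pi.smul_apply, smul_eq_mul, this, Finset.mul_sum]
  have hmem : ∀ χ : T, MemLp (Lap χ.1) 2 volume := fun χ => memLp_cs χ.2.1.lap (cs_lap χ.2.2) 2
  have hintg : ∀ χ : T, Integrable (fun x => p x * Lap χ.1 x) volume := by
    intro χ
    have := hp.locallyIntegrable.integrable_smul_left_of_hasCompactSupport
      χ.2.1.lap.cont (cs_lap χ.2.2)
    refine this.congr (Eventually.of_forall fun t => ?_)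
    simp [mul_comm]
  let L : T →ₗ[ℝ] Lp ℝ 2 (volume : Measure E3) :=
    { toFun := fun χ => (hmem χ).toLp _
      map_add' := by
        intro a b
        rw [← MemLp.toLp_add]
        congr 1
        exact hlap_add a.2.1 b.2.1
      map_smul' := by
        intro c a
        rw [RingHom.id_apply, ← MemLp.toLp_const_smul]
        congr 1
        exact hlap_smul c a.2.1 }
  let l : T →ₗ[ℝ] ℝ :=
    { toFun := fun χ => ∫ x, p x * Lap χ.1 x
      map_add' := by
        intro a b
        have : Lap (a + b : T).1 = Lap a.1 + Lap b.1 := hlap_add a.2.1 b.2.1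
        rw [this, ← integral_add (hintg a) (hintg b)]
        simp [mul_add]
      map_smul' := by
        intro c a
        have : Lap (c • a : T).1 = c • Lap a.1 := hlap_smul c a.2.1
        rw [this, RingHom.id_apply, smul_eq_mul, ← integral_const_mul]
        congr 1; ext x
        simp; ring }
  let K : ℝ := (∑ i, ∑ j, n2 (A i j)) +
    ∑ i, (eLpNorm (H i) (ENNReal.ofReal (6 / 5)) volume).toReal * (C * 3)
  have hbound : ∀ t : T, |l t| ≤ K * ‖L t‖ := by
    intro χ
    obtain ⟨χ, hs, hc⟩ := χ
    have hLn : ‖L ⟨χ, hs, hc⟩‖ = n2 (Lap χ) := Lp.norm_toLp _ (hmem ⟨χ, hs, hc⟩)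
    rw [hLn]
    change |∫ x, p x * Lap χ x| ≤ _
    rw [hid χ hs hc]
    simp only [K, add_mul, Finset.sum_mul]
    refine (abs_add_le _ _).trans (add_le_add ?_ ?_)
    · refine (Finset.abs_sum_le_sum_abs _ _).trans (Finset.sum_le_sum fun i _ => ?_)
      refine (Finset.abs_sum_le_sum_abs _ _).trans (Finset.sum_le_sum fun j _ => ?_)
      have := (holder_int (hA i j) (memLp_cs ((hs.pd i).pd j) (cs_pd (cs_pd hc i) j) 2)).2
      refine this.trans ?_
      exact mul_le_mul_of_nonneg_left (n2_hess_le hs hc i j) ENNReal.toReal_nonneg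
    · refine (Finset.abs_sum_le_sum_abs _ _).trans (Finset.sum_le_sum fun i _ => ?_)
      have := (holder_int (hH i) (memLp_cs (hs.pd i) (cs_pd hc i) 6)).2
      refine this.trans ?_
      rw [mul_assoc]
      refine mul_le_mul_of_nonneg_left ?_ ENNReal.toReal_nonneg
      refine (hC _ (hs.pd i) (cs_pd hc i)).trans ?_
      rw [mul_assoc]
      refine mul_le_mul_of_nonneg_left ?_ hC0
      rw [Fin.sum_univ_three]
      linarith [n2_hess_le hs hc i 0, n2_hess_le hs hc i 1, n2_hess_le hs hc i 2]
  obtain ⟨g, hg⟩ := riesz_ext L l K hbound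
  have hpg : p =ᵐ[volume] g := by
    apply weyl hp (Lp.memLp g)
    intro χ hs hc
    have := hg ⟨χ, hs, hc⟩
    change ∫ x, p x * Lap χ x = _ at this
    rw [this, L2.inner_def]
    apply integral_congr_ae
    have h2 : (L ⟨χ, hs, hc⟩ : E3 → ℝ) =ᵐ[volume] Lap χ := MemLp.coeFn_toLp (hmem ⟨χ, hs, hc⟩)
    filter_upwards [h2] with x hx
    rw [hx]
    simp [mul_comm]
  exact (memLp_congr_ae hpg).2 (Lp.memLp g)

lemma pt_ineq {a b γ : ℝ} (ha : 0 ≤ a) (hb : 0 ≤ b) (hγ : 6 ≤ γ) :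
    (a * b) ^ 2 ≤ a * b + a ^ γ + b ^ 3 := by
  have h1 : 0 ≤ a ^ γ := Real.rpow_nonneg ha _
  have h2 : 0 ≤ b ^ 3 := by positivity
  have h3 : 0 ≤ a * b := mul_nonneg ha hb
  rcases le_total a 1 with h | h
  · rcases le_total b 1 with h' | h'
    · have : a * b ≤ 1 := mul_le_one₀ h hb h'
      nlinarith
    · have e1 : (a * b) ^ 2 ≤ b ^ 2 := by
        apply pow_le_pow_left₀ h3
        nlinarith
      have e2 : b ^ 2 ≤ b ^ 3 := pow_le_pow_right₀ h' (by norm_num)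
      linarith
  · have e1 : a ^ 6 ≤ a ^ γ := by
      rw [← Real.rpow_natCast]
      exact Real.rpow_le_rpow_of_exponent_le h (by exact_mod_cast hγ)
    have e2 : (a * b) ^ 2 ≤ a ^ 6 + b ^ 3 := by
      rcases le_total b (a ^ 2) with h' | h'
      · have : (a * b) ^ 2 ≤ (a * a ^ 2) ^ 2 :=
          pow_le_pow_left₀ h3 (mul_le_mul_of_nonneg_left h' ha) 2
        nlinarith
      · have : a ^ 2 * b ^ 2 ≤ b * b ^ 2 := mul_le_mul_of_nonneg_right h' (by positivity)
        have : 0 ≤ a ^ 6 := by positivity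
        nlinarith
    linarith

/-- **Corollary.** Let `(ρ, u)` be a weak solution of the stationary isentropic system on `ℝ³`
with `γ ≥ 6` and `G ∈ D₀^{1, 6γ/(5γ−6)}(ℝ³)`. If the total energy
`∫_{ℝ³} ((1/2) ρ|u|² + ρ^γ/(γ−1))` is finite, then `ρ ∈ L^{2γ}(ℝ³)`. -/
theorem higher_integrability_finite_energy
    (μ η γ : ℝ) (hμ : 0 < μ) (hη : 0 ≤ η) (hγ : 6 ≤ γ)
    (G : E3 → ℝ) (dG : E3 → Fin 3 → ℝ)
    (ρ : E3 → ℝ) (u : E3 → Fin 3 → ℝ) (du : E3 → Fin 3 → Fin 3 → ℝ)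
    (hG : MemD01q univ G dG (6 * γ / (5 * γ - 6)))
    (hsol : IsentropicWeakSolution μ η γ G dG ρ u du)
    (henergy : Integrable
      (fun x => (1 / 2) * ρ x * (∑ i, (u x i) ^ 2) + ρ x ^ γ / (γ - 1)) volume) :
    MemLp ρ (ENNReal.ofReal (2 * γ)) volume := by
  unfold IsentropicWeakSolution at hsol
  have hγ0 : 0 < γ := by linarith
  have hρm := hsol.aemeas_ρ
  have hum := hsol.aemeas_u
  have hρ0 : ∀ᵐ x ∂(volume : Measure E3), 0 ≤ ρ x := by simpa using hsol.ρ_nonneg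
  have huim : ∀ i, AEMeasurable (fun x => u x i) volume := fun i =>
    (measurable_pi_apply i).comp_aemeasurable hum
  have hu2m : AEMeasurable (fun x => ∑ i, (u x i) ^ 2) volume :=
    Finset.aemeasurable_fun_sum _ fun i _ => (huim i).pow_const 2
  have hpm : AEMeasurable (fun x => ρ x ^ γ) volume := hρm.pow_const γ
  -- integrability of the two energies
  have hp : Integrable (fun x => ρ x ^ γ) volume := by
    refine (henergy.const_mul (γ - 1)).mono' hpm.aestronglyMeasurable ?_
    filter_upwards [hρ0] with x hx
    have h1 : 0 ≤ ρ x ^ γ := Real.rpow_nonneg hx _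
    have h2 : 0 ≤ ∑ i, (u x i) ^ 2 := Finset.sum_nonneg fun i _ => sq_nonneg _
    rw [Real.norm_of_nonneg h1, mul_add, mul_div_cancel₀ _ (by linarith)]
    have : 0 ≤ (γ - 1) * (1 / 2 * ρ x * ∑ i, (u x i) ^ 2) :=
      mul_nonneg (by linarith) (mul_nonneg (by linarith) h2)
    linarith
  have hρu2 : Integrable (fun x => ρ x * ∑ i, (u x i) ^ 2) volume := by
    refine (henergy.const_mul 2).mono' (hρm.mul hu2m).aestronglyMeasurable ?_
    filter_upwards [hρ0] with x hx
    have h1 : 0 ≤ ρ x ^ γ / (γ - 1) := div_nonneg (Real.rpow_nonneg hx _) (by linarith)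
    have h2 : 0 ≤ ∑ i, (u x i) ^ 2 := Finset.sum_nonneg fun i _ => sq_nonneg _
    rw [Real.norm_of_nonneg (mul_nonneg hx h2)]
    linarith
  obtain ⟨-, -, hdu, un, hun, -, hun6⟩ := hsol.u_D012
  simp only [Measure.restrict_univ] at hdu hun6
  -- u ∈ L^6
  have hu6 : MemLp u 6 volume := by
    obtain ⟨n, hn⟩ := (hun6.eventually_lt_const (u := 1) (by norm_num)).exists
    have h1 : MemLp (un n) 6 volume :=
      (hun n).1.continuous.memLp_of_hasCompactSupport (hun n).2.1
    have h2 : MemLp (fun x => un n x - u x) 6 volume :=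
      ⟨h1.1.sub hum.aestronglyMeasurable, hn.trans (by norm_num)⟩
    have h3 := h1.sub h2
    refine (memLp_congr_ae (Eventually.of_forall fun x => ?_)).1 h3
    simp
  have hui6 : ∀ i, MemLp (fun x => u x i) 6 volume := fun i => hu6.eval i
  have hu23 : Integrable (fun x => (∑ i, (u x i) ^ 2) ^ 3) volume := by
    have : ∀ i, Integrable (fun x => ‖u x i‖ ^ 6) volume := fun i => by
      have := (hui6 i).integrable_norm_pow (p := 6) (by norm_num)
      exact this
    refine ((integrable_finsetSum Finset.univ fun i _ => this i).const_mul 9).mono'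
      (hu2m.pow_const 3).aestronglyMeasurable (Eventually.of_forall fun x => ?_)
    have h2 : 0 ≤ ∑ i, (u x i) ^ 2 := Finset.sum_nonneg fun i _ => sq_nonneg _
    rw [Real.norm_of_nonneg (by positivity)]
    have h3 : ∀ t : ℝ, ‖t‖ ^ 6 = (t ^ 2) ^ 3 := fun t => by
      rw [← pow_mul, Real.norm_eq_abs]
      exact (by decide : Even 6).pow_abs t
    simp_rw [h3]
    have hpm := Real.pow_arith_mean_le_arith_mean_pow Finset.univ (fun _ => (1 / 3 : ℝ))
      (fun i => u x i ^ 2) (by norm_num) (by norm_num) (by intros; positivity) 3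
    rw [← Finset.mul_sum, ← Finset.mul_sum] at hpm
    rw [mul_pow] at hpm
    linarith
  have hρuu : MemLp (fun x => ρ x * ∑ i, (u x i) ^ 2) 2 volume := by
    refine (memLp_two_iff_integrable_sq (hρm.mul hu2m).aestronglyMeasurable).2 ?_
    refine ((hρu2.add hp).add hu23).mono' ((hρm.mul hu2m).pow_const 2).aestronglyMeasurable ?_
    filter_upwards [hρ0] with x hx
    rw [Real.norm_of_nonneg (sq_nonneg _)]
    exact pt_ineq hx (Finset.sum_nonneg fun i _ => sq_nonneg _) hγ
  have hF : ∀ i j, MemLp (fun x => ρ x * u x i * u x j) 2 volume := by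
    intro i j
    refine hρuu.mono ((hρm.mul (huim i)).mul (huim j)).aestronglyMeasurable ?_
    filter_upwards [hρ0] with x hx
    have h2 : 0 ≤ ∑ i, (u x i) ^ 2 := Finset.sum_nonneg fun i _ => sq_nonneg _
    rw [Real.norm_of_nonneg (mul_nonneg hx h2), mul_assoc, norm_mul, Real.norm_of_nonneg hx]
    refine mul_le_mul_of_nonneg_left ?_ hx
    have hi := Finset.single_le_sum (f := fun i => (u x i) ^ 2) (fun i _ => sq_nonneg _)
      (Finset.mem_univ i)
    have hj := Finset.single_le_sum (f := fun i => (u x i) ^ 2) (fun i _ => sq_nonneg _)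
      (Finset.mem_univ j)
    rw [Real.norm_eq_abs, abs_mul]
    nlinarith [sq_nonneg (|u x i| - |u x j|), sq_abs (u x i), sq_abs (u x j)]
  have hduij : ∀ i j, MemLp (fun x => du x i j) 2 volume := fun i j => (hdu.eval i).eval j
  have hS : ∀ i j, MemLp (fun x => Smat μ η (du x) i j) 2 volume := by
    intro i j
    have ht : MemLp (fun x => ∑ k, du x k k) 2 volume := memLp_finsetSum _ fun k _ => hduij k k
    have := (((hduij i j).add (hduij j i)).sub ((ht.const_mul (2 / 3)).mul_const
      (if i = j then (1 : ℝ) else 0))).const_mul μ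
    have h2 := this.add ((ht.const_mul η).mul_const (if i = j then (1 : ℝ) else 0))
    exact h2
  -- ρ ∈ L^γ
  have hργ : MemLp ρ (ENNReal.ofReal γ) volume := by
    rw [← integrable_norm_rpow_iff hρm.aestronglyMeasurable (by simpa using hγ0) (by simp)]
    refine hp.congr ?_
    filter_upwards [hρ0] with x hx
    rw [Real.norm_of_nonneg hx, ENNReal.toReal_ofReal hγ0.le]
  have hdG := hG.2.1
  simp only [Measure.restrict_univ] at hdG
  have hq : 0 < 6 * γ / (5 * γ - 6) := div_pos (by linarith) (by linarith)
  have : ENNReal.HolderTriple (ENNReal.ofReal γ) (ENNReal.ofReal (6 * γ / (5 * γ - 6)))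
      (ENNReal.ofReal (6 / 5)) := ⟨by
    rw [← ENNReal.ofReal_inv_of_pos hγ0, ← ENNReal.ofReal_inv_of_pos hq,
      ← ENNReal.ofReal_inv_of_pos (by norm_num), ← ENNReal.ofReal_add (by positivity) (by positivity)]
    congr 1
    have : 5 * γ - 6 ≠ 0 := by linarith
    field_simp
    ring⟩
  have hH : ∀ i, MemLp (fun x => ρ x * dG x i) (ENNReal.ofReal (6 / 5)) volume := fun i =>
    (hdG.eval i).mul' hργ
  -- the pressure is in L²
  have hp2 : MemLp (fun x => ρ x ^ γ) 2 volume := by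
    refine core hp (A := fun i j x => Smat μ η (du x) i j - ρ x * u x i * u x j)
      (fun i j => (hS i j).sub (hF i j)) (H := fun i x => - (ρ x * dG x i))
      (fun i => (hH i).neg) ?_
    intro χ hs hc
    have htest : IsTestVec 1 univ (fun x i => pd χ i x) := by
      refine ⟨contDiff_pi.2 fun i => ContDiff.of_le (hs.pd i) (by exact_mod_cast le_top), ?_,
        subset_univ _⟩
      refine HasCompactSupport.intro hc.isCompact fun x hx => ?_
      ext i
      have : tsupport (pd χ i) ⊆ tsupport χ :=
        tsupport_fderiv_apply_subset ℝ _
      exact image_eq_zero_of_notMem_tsupport fun h => hx (this h)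
    have hmom := hsol.momentum _ htest
    simp only [Measure.restrict_univ] at hmom
    have htg : ∀ x i j, tgrad (fun x i => pd χ i x) x i j = pd (pd χ i) j x := fun x i j => rfl
    simp only [htg] at hmom
    have hh2 : ∀ i j, MemLp (pd (pd χ i) j) 2 volume := fun i j =>
      memLp_cs ((hs.pd i).pd j) (cs_pd (cs_pd hc i) j) 2
    have i1 : ∀ i j, Integrable (fun x => ρ x * u x i * u x j * pd (pd χ i) j x) volume :=
      fun i j => (holder_int (hF i j) (hh2 i j)).1
    have i2 : ∀ i j, Integrable (fun x => Smat μ η (du x) i j * pd (pd χ i) j x) volume :=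
      fun i j => (holder_int (hS i j) (hh2 i j)).1
    have := holder65
    have i3 : ∀ i, Integrable (fun x => ρ x * dG x i * pd χ i x) volume := fun i =>
      (holder_int (hH i) (memLp_cs (hs.pd i) (cs_pd hc i) 6)).1
    have i4 : Integrable (fun x => ρ x ^ γ * Lap χ x) volume := by
      have := hp.locallyIntegrable.integrable_smul_left_of_hasCompactSupport
        hs.lap.cont (cs_lap hc)
      refine this.congr (Eventually.of_forall fun t => ?_)
      simp [mul_comm]
    change ∫ x, ((∑ i, ∑ j, ρ x * u x i * u x j * pd (pd χ i) j x) + ρ x ^ γ * Lap χ x) = _ at hmom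
    rw [integral_add (integrable_finsetSum _ fun i _ => integrable_finsetSum _ fun j _ => i1 i j) i4,
      integral_finsetSum _ fun i _ => integrable_finsetSum _ fun j _ => i1 i j,
      integral_finsetSum _ fun i _ => integrable_finsetSum _ fun j _ => i2 i j,
      integral_finsetSum _ fun i _ => i3 i] at hmom
    simp_rw [integral_finsetSum Finset.univ fun j _ => i1 _ j,
      integral_finsetSum Finset.univ fun j _ => i2 _ j] at hmom
    have e1 : ∀ i j, ∫ x, (Smat μ η (du x) i j - ρ x * u x i * u x j) * pd (pd χ i) j x
        = (∫ x, Smat μ η (du x) i j * pd (pd χ i) j x)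
          - ∫ x, ρ x * u x i * u x j * pd (pd χ i) j x := by
      intro i j
      rw [← integral_sub (i2 i j) (i1 i j)]
      congr 1; ext x; ring
    simp_rw [e1, neg_mul, integral_neg, Finset.sum_sub_distrib, Finset.sum_neg_distrib]
    linarith
  have h2γ : (0 : ℝ) < 2 * γ := by linarith
  rw [← integrable_norm_rpow_iff hρm.aestronglyMeasurable (by simpa using hγ0) ENNReal.ofReal_ne_top]
  refine hp2.integrable_sq.congr ?_
  filter_upwards [hρ0] with x hx
  rw [Real.norm_of_nonneg hx, ENNReal.toReal_ofReal h2γ.le, ← Real.rpow_natCast,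
    ← Real.rpow_mul hx]
  congr 1
  push_cast; ring
end
end
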